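/- Let λ be a d-invariant rational lamination. Every infinite λ-unlinked class L is eventually periodic under m_d: there exist n > 0 and ℓ ≥ 0 with m_d^{n+ℓ}(L) = m_d^{ℓ}(L). -/

import Mathlib

noncomputable section
open Set Function

/-- The circle `ℝ/ℤ`. -/
abbrev Circle1 := AddCircle (1 : ℝ)

/-- Multiplication by `d` on the circle. -/
def md (d : ℕ) (x : Circle1) : Circle1 := d • x

/-- The rational angles `ℚ/ℤ ⊆ ℝ/ℤ`. -/
def ratC : Set Circle1 := {x | ∃ q : ℚ, x = ((q : ℝ) : Circle1)}

/-- `A` and `B` are unlinked: `B` is contained in a single connected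
component of the complement of `A`. -/
def Unlinked (A B : Set Circle1) : Prop :=
  ∃ x ∈ Aᶜ, B ⊆ connectedComponentIn Aᶜ x

/-- `C` is a connected component of `S`. -/
def IsCompOf (C S : Set Circle1) : Prop :=
  ∃ x ∈ S, C = connectedComponentIn S x

/-- The class of `x` under a relation `r`. -/
def relClass (r : Circle1 → Circle1 → Prop) (x : Circle1) : Set Circle1 := {y | r x y}

/-- A rational lamination: a closed equivalence relation on `ℚ/ℤ` with finite,
pairwise unlinked classes. -/
structure RatLam where
  rel : Circle1 → Circle1 → Prop
  rel_rat : ∀ x y, rel x y → x ∈ ratC ∧ y ∈ ratC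
  refl : ∀ x ∈ ratC, rel x x
  symm : ∀ x y, rel x y → rel y x
  trans : ∀ x y z, rel x y → rel y z → rel x z
  closed' : ∀ x ∈ ratC, ∀ y ∈ ratC,
    (x, y) ∈ closure {p : Circle1 × Circle1 | rel p.1 p.2} → rel x y
  finiteClass : ∀ x, (relClass rel x).Finite
  unlinkedClass : ∀ x y, ¬ rel x y → Unlinked (relClass rel x) (relClass rel y)

/-- `m_d` maps `A` onto `B` in a consecutive-preserving way: the image of `A` is `B`
and the connected components of the complement of `A` are sent to components of the
complement of `B` endpoint-wise. -/
def ConsecutiveImage (d : ℕ) (A B : Set Circle1) : Prop :=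
  md d '' A = B ∧
    ∀ C, IsCompOf C Aᶜ → ∃ C', IsCompOf C' Bᶜ ∧ frontier C' = md d '' frontier C

/-- A `d`-invariant rational lamination. -/
structure InvRatLam (d : ℕ) extends RatLam where
  invariant : ∀ x ∈ ratC,
    ConsecutiveImage d (relClass rel x) (relClass rel (md d x))

/-- `m_d : A → m_d(A)` is `δ`-to-one. -/
def classDeg (d : ℕ) (A : Set Circle1) (δ : ℕ) : Prop :=
  ∀ y ∈ md d '' A, Set.ncard {x | x ∈ A ∧ md d x = y} = δ

/-- The `λ`-unlinked relation on irrational angles: `θ ~ θ'` iff they lie in the same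
connected component of the complement of every `λ`-class. -/
def UnlRel (r : Circle1 → Circle1 → Prop) (θ θ' : Circle1) : Prop :=
  θ ∉ ratC ∧ θ' ∉ ratC ∧
    (θ = θ' ∨ ∀ x ∈ ratC, θ' ∈ connectedComponentIn (relClass r x)ᶜ θ)

/-- `L` is a `λ`-unlinked class. -/
def IsUnlClass (r : Circle1 → Circle1 → Prop) (L : Set Circle1) : Prop :=
  ∃ θ, θ ∉ ratC ∧ L = {θ' | UnlRel r θ θ'}


structure RL (d : ℕ) (R : ℝ → ℝ → Prop) : Prop where
  d2 : 2 ≤ d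
  rat : ∀ x, R x x ↔ ∃ q : ℚ, (q : ℝ) = x
  symm : ∀ x y, R x y → R y x
  trans : ∀ x y z, R x y → R y z → R x z
  per : ∀ x y (n : ℤ), R x y → R x (y + n)
  fin : ∀ x a b, {y | R x y ∧ y ∈ Icc a b}.Finite
  nc : ∀ x1 x2 y1 y2, R x1 x2 → R y1 y2 → x1 < y1 → y1 < x2 → x2 < y2 → y2 < x1 + 1 → R x1 y1
  fwd : ∀ x y, R x y → R (d * x) (d * y)
  onto : ∀ x y, R (d * x) y → ∃ w, R x w ∧ ∃ n : ℤ, d * w = y + n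

def low (R : ℝ → ℝ → Prop) (x t : ℝ) : ℝ := sSup {c | R x c ∧ c < t}

/-- class of `x` does not separate the left germs of `t`, `u`. -/
def NS (R : ℝ → ℝ → Prop) (x t u : ℝ) : Prop := ∃ n : ℤ, low R x u = low R x t + n

def EE (R : ℝ → ℝ → Prop) (D : Set ℝ) (t u : ℝ) : Prop := ∀ x ∈ D, NS R x t u

structure LF (R : ℝ → ℝ → Prop) (D : Set ℝ) : Prop where
  self : ∀ x ∈ D, R x x
  sat : ∀ x ∈ D, ∀ y, R x y → y ∈ D
  fin : ∀ a b, (D ∩ Icc a b).Finite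

section
variable {d : ℕ} {R : ℝ → ℝ → Prop}

theorem RL.left (h : RL d R) {x y : ℝ} (hxy : R x y) : R x x := h.trans _ _ _ hxy (h.symm _ _ hxy)

theorem RL.right (h : RL d R) {x y : ℝ} (hxy : R x y) : R y y := h.trans _ _ _ (h.symm _ _ hxy) hxy

theorem RL.low_eq (h : RL d R) {x t c : ℝ} (h1 : R x c) (h2 : c < t)
    (h3 : ∀ c', R x c' → c' < t → c' ≤ c) : low R x t = c :=
  IsGreatest.csSup_eq ⟨⟨h1, h2⟩, fun c' hc => h3 c' hc.1 hc.2⟩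

theorem RL.low_spec (h : RL d R) {x : ℝ} (hx : R x x) (t : ℝ) :
    R x (low R x t) ∧ low R x t < t ∧ ∀ c, R x c → c < t → c ≤ low R x t := by
  obtain ⟨n, hn1, hn2⟩ : ∃ n : ℤ, x + n < t ∧ t - 1 ≤ x + n := by
    refine ⟨⌈t - x⌉ - 1, ?_, ?_⟩
    · have := Int.ceil_lt_add_one (t - x); push_cast; linarith
    · have := Int.le_ceil (t - x); push_cast; linarith
  have hfin : {y | R x y ∧ y ∈ Icc (t - 1) t ∧ y < t}.Finite :=
    (h.fin x (t - 1) t).subset (fun y hy => ⟨hy.1, hy.2.1⟩)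
  obtain ⟨m, hm, hmax⟩ := Set.exists_max_image _ (fun y => y) hfin
    ⟨x + n, h.per _ _ _ hx, ⟨hn2, hn1.le⟩, hn1⟩
  have key : ∀ c, R x c → c < t → c ≤ m := by
    intro c hc hct
    by_cases h1 : t - 1 ≤ c
    · exact hmax c ⟨hc, ⟨h1, hct.le⟩, hct⟩
    · have := hm.2.1.1; linarith
  have := h.low_eq hm.1 hm.2.2 key
  rw [this]
  exact ⟨hm.1, hm.2.2, key⟩

theorem RL.per_iff (h : RL d R) {x y : ℝ} (n : ℤ) : R x (y + n) ↔ R x y := by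
  refine ⟨fun hh => ?_, h.per _ _ _⟩
  have := h.per _ _ (-n) hh
  simpa using this

theorem RL.low_ge (h : RL d R) {x : ℝ} (hx : R x x) (t : ℝ) : t ≤ low R x t + 1 := by
  obtain ⟨h1, h2, h3⟩ := h.low_spec hx t
  by_contra hc
  push Not at hc
  have := h3 (low R x t + 1) (by have := h.per _ _ 1 h1; simpa using this) hc
  linarith

theorem RL.low_add (h : RL d R) {x : ℝ} (hx : R x x) (t : ℝ) (n : ℤ) :
    low R x (t + n) = low R x t + n := by
  obtain ⟨h1, h2, h3⟩ := h.low_spec hx t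
  refine h.low_eq (h.per _ _ _ h1) (by linarith) ?_
  intro c hc hct
  have := h3 (c + (-n : ℤ)) (h.per _ _ _ hc) (by push_cast; linarith)
  push_cast at this; linarith

theorem RL.low_mono (h : RL d R) {x : ℝ} (hx : R x x) {t u : ℝ} (htu : t ≤ u) :
    low R x t ≤ low R x u := by
  obtain ⟨h1, h2, h3⟩ := h.low_spec hx t
  exact (h.low_spec hx u).2.2 _ h1 (by linarith)

theorem RL.low_congr (h : RL d R) {x y : ℝ} (hxy : R x y) (t : ℝ) : low R x t = low R y t := by
  obtain ⟨h1, h2, h3⟩ := h.low_spec (h.right hxy) t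
  exact h.low_eq (h.trans _ _ _ hxy h1) h2 fun c hc => h3 c (h.trans _ _ _ (h.symm _ _ hxy) hc)

theorem RL.low_same (h : RL d R) {x : ℝ} (hx : R x x) {t u : ℝ} (htu : t ≤ u)
    (hno : ∀ c, R x c → t ≤ c → c < u → False) : low R x u = low R x t := by
  obtain ⟨h1, h2, h3⟩ := h.low_spec hx t
  refine h.low_eq h1 (by linarith) fun c hc hcu => h3 c hc ?_
  by_contra hh
  exact hno c hc (not_lt.1 hh) hcu

theorem NS.refl (x t : ℝ) : NS R x t t := ⟨0, by simp⟩
theorem NS.symm {x t u : ℝ} (h : NS R x t u) : NS R x u t := by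
  obtain ⟨n, hn⟩ := h
  exact ⟨-n, by push_cast; linarith⟩
theorem NS.trans {x t u v : ℝ} (h : NS R x t u) (h' : NS R x u v) : NS R x t v := by
  obtain ⟨n, hn⟩ := h
  obtain ⟨m, hm⟩ := h'
  exact ⟨n + m, by push_cast; linarith⟩
theorem RL.NS_add (h : RL d R) {x : ℝ} (hx : R x x) (t : ℝ) (n : ℤ) : NS R x t (t + n) :=
  ⟨n, h.low_add hx t n⟩
theorem RL.NS_congr (h : RL d R) {x y t u : ℝ} (hxy : R x y) (hn : NS R x t u) : NS R y t u := by
  obtain ⟨n, hn⟩ := hn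
  exact ⟨n, by rw [← h.low_congr hxy, ← h.low_congr hxy, hn]⟩

theorem EE.refl (D : Set ℝ) (t : ℝ) : EE R D t t := fun x _ => NS.refl x t
theorem EE.symm {D : Set ℝ} {t u : ℝ} (h : EE R D t u) : EE R D u t := fun x hx => (h x hx).symm
theorem EE.trans {D : Set ℝ} {t u v : ℝ} (h : EE R D t u) (h' : EE R D u v) : EE R D t v :=
  fun x hx => (h x hx).trans (h' x hx)
theorem RL.EE_add (h : RL d R) {D : Set ℝ} (hD : ∀ x ∈ D, R x x) (t : ℝ) (n : ℤ) :
    EE R D t (t + n) := fun x hx => h.NS_add (hD x hx) t n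

theorem RL.EE_same (h : RL d R) {D : Set ℝ} (hD : LF R D) {t u : ℝ} (htu : t ≤ u)
    (hno : ∀ c ∈ D, t ≤ c → c < u → False) : EE R D t u := fun x hx =>
  ⟨0, by simpa using h.low_same (hD.self x hx) htu fun c hc => hno c (hD.sat x hx c hc)⟩

/-- two points of one class are not separated by another class -/
theorem RL.classNS (h : RL d R) {b y y' : ℝ} (hb : R b b) (hy : R y y') (hn : ¬ R b y) :
    NS R b y y' := by
  obtain ⟨h1, h2, h3⟩ := h.low_spec hb y
  have h4 := h.low_ge hb y
  set β := low R b y with hβ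
  obtain ⟨n, hn1, hn2⟩ : ∃ n : ℤ, β < y' + n ∧ y' + n ≤ β + 1 := by
    refine ⟨⌊β + 1 - y'⌋, ?_, ?_⟩
    · have := Int.lt_floor_add_one (β + 1 - y'); linarith
    · have := Int.floor_le (β + 1 - y'); linarith
  have hyn : R y (y' + n) := h.per _ _ _ hy
  have hnn : ¬ R b (y' + n) := fun hh => hn (h.trans _ _ _ hh (h.symm _ _ hyn))
  have hβ1 : R b (β + 1) := by have := h.per _ _ 1 h1; simpa using this
  have hlt : y' + n < β + 1 := lt_of_le_of_ne hn2 fun e => hnn (e ▸ hβ1)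
  have key : low R b (y' + n) = β := by
    rcases le_total y (y' + n) with hle | hle
    · apply h.low_same hb hle
      intro c hc hc1 hc2
      have hc3 : y < c := lt_of_le_of_ne hc1 fun e => hn (e ▸ hc)
      have := h.nc y (y' + n) c (β + 1) hyn (h.trans _ _ _ (h.symm _ _ hc) hβ1) hc3 hc2 hlt (by linarith)
      exact hn (h.trans _ _ _ hc (h.symm _ _ this))
    · exact h.low_eq h1 hn1 fun c hc hc2 => h3 c hc (by linarith)
  rw [h.low_add hb] at key
  exact ⟨-n, by push_cast; linarith⟩

/-- the next arc of the same gap -/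
theorem RL.next (h : RL d R) {D : Set ℝ} (hD : LF R D) {e e' : ℝ} (he : e ∈ D)
    (hs : low R e e + 1 < e') (hno : ∀ c ∈ D, low R e e + 1 < c → c < e' → False) :
    EE R D e e' := by
  intro x hx
  have hee := hD.self e he
  obtain ⟨h1, h2, h3⟩ := h.low_spec hee e
  have h4 := h.low_ge hee e
  have hes : R e (low R e e + 1) := by have := h.per _ _ 1 h1; simpa using this
  generalize hsd : low R e e + 1 = s at *
  have hxx := hD.self x hx
  by_cases hex : R e x
  · refine ⟨1, ?_⟩
    rw [← h.low_congr hex, ← h.low_congr hex]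
    push_cast
    rw [hsd]
    refine h.low_eq hes hs fun c hc hc2 => ?_
    by_contra hh
    exact hno c (hD.sat e he c hc) (not_le.1 hh) hc2
  · have hxe : ¬ R x e := fun hh => hex (h.symm _ _ hh)
    have hxs : ¬ R x s := fun hh => hxe (h.trans _ _ _ hh (h.symm _ _ hes))
    have hse' : low R x e' = low R x s := by
      apply h.low_same hxx hs.le
      intro c hc hc1 hc2
      exact hno c (hD.sat x hx c hc) (lt_of_le_of_ne hc1 fun e => hxs (e ▸ hc)) hc2
    by_cases hc : ∃ c, R x c ∧ e ≤ c ∧ c < s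
    · obtain ⟨c, hc, hc1, hc2⟩ := hc
      have hc3 : e < c := lt_of_le_of_ne hc1 fun e => hxe (e ▸ hc)
      have : low R x e = low R x (s + (-1 : ℤ)) := by
        apply h.low_same hxx (by push_cast; linarith)
        intro c' hc' hd1 hd2
        push_cast at hd1
        have hd3 : s < c' + (1 : ℤ) := by
          refine lt_of_le_of_ne (by push_cast; linarith) fun e => hxs ?_
          rw [e]; exact h.per _ _ _ hc'
        have := h.nc e s c (c' + (1 : ℤ)) hes
          (h.trans _ _ _ (h.symm _ _ hc) (h.per _ _ _ hc')) hc3 hc2 hd3 (by push_cast; linarith)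
        exact hex (h.trans _ _ _ this (h.symm _ _ hc))
      rw [h.low_add hxx] at this
      exact ⟨1, by rw [hse', this]; push_cast; ring⟩
    · push Not at hc
      refine ⟨0, ?_⟩
      rw [hse', h.low_same hxx h4 fun c h1 h2 h3 => absurd h3 (not_lt.2 (hc c h1 h2))]
      simp

/-- pick a point slightly to the right of `s` -/
theorem LF.exists_right {D : Set ℝ} (hD : LF R D) {s t : ℝ} (hst : s < t) :
    ∃ e, s < e ∧ e ≤ t ∧ ∀ c ∈ D, s < c → c < e → False := by
  by_cases hc : (D ∩ Icc s t ∩ {c | s < c}).Nonempty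
  · obtain ⟨m, hm, hmin⟩ := Set.exists_min_image _ (fun y => y)
      ((hD.fin s t).subset (inter_subset_left (t := {c | s < c}))) hc
    refine ⟨m, hm.2, hm.1.2.2, fun c hc h1 h2 => ?_⟩
    have := hmin c ⟨⟨hc, h1.le, h2.le.trans hm.1.2.2⟩, h1⟩
    linarith
  · refine ⟨t, hst, le_rfl, fun c hcD h1 h2 => hc ⟨c, ⟨hcD, h1.le, h2.le⟩, h1⟩⟩

theorem RL.walk (h : RL d R) {D : Set ℝ} (hD : LF R D) (t0 : ℝ) (P : ℝ → Prop)
    (h1 : ∀ t u, P t → t ≤ u → (∀ c ∈ D, t ≤ c → c < u → False) → P u)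
    (h2 : ∀ e ∈ D, P e → EE R D t0 e → ∀ e', low R e e + 1 < e' →
      (∀ c ∈ D, low R e e + 1 < c → c < e' → False) → P e')
    (u : ℝ) (hu : t0 ≤ u) (hE : EE R D t0 u) (hP : P t0) : P u := by
  suffices H : ∀ N : ℕ, ∀ t, t ≤ u → EE R D t0 t → P t → (D ∩ Ico t u).ncard = N → P u from
    H _ t0 hu (EE.refl _ _) hP rfl
  intro N
  induction N using Nat.strong_induction_on with
  | _ N ih =>
  intro t htu hEt hPt hN
  have hfin : (D ∩ Ico t u).Finite :=
    (hD.fin t u).subset (inter_subset_inter_right _ Ico_subset_Icc_self)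
  by_cases hne : (D ∩ Ico t u).Nonempty
  · obtain ⟨e, he, hmin⟩ := Set.exists_min_image _ (fun y => y) hfin hne
    have hno : ∀ c ∈ D, t ≤ c → c < e → False := fun c hc c1 c2 => by
      have := hmin c ⟨hc, c1, c2.trans he.2.2⟩
      linarith
    have hPe : P e := h1 t e hPt he.2.1 hno
    have hEe : EE R D t e := h.EE_same hD he.2.1 hno
    have hee := hD.self e he.1
    obtain ⟨l1, l2, l3⟩ := h.low_spec hee e
    have l4 := h.low_ge hee e
    obtain ⟨n, hn⟩ : NS R e e u := ((hEt.trans hEe).symm.trans hE) e he.1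
    have hlu := h.low_spec hee u
    have hge : e ≤ low R e u := hlu.2.2 e hee he.2.2
    have hn1 : (1 : ℤ) ≤ n := by
      by_contra hc
      have : n ≤ 0 := by omega
      have : (n : ℝ) ≤ 0 := by exact_mod_cast this
      linarith
    have hn1' : (1 : ℝ) ≤ n := by exact_mod_cast hn1
    have hsu : low R e e + 1 < u := by linarith [hlu.2.1]
    obtain ⟨e', he1, he2, he3⟩ := hD.exists_right hsu
    have hPe' := h2 e he.1 hPe (hEt.trans hEe) e' he1 he3
    refine ih _ ?_ e' he2 ((hEt.trans hEe).trans (h.next hD he.1 he1 he3)) hPe' rfl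
    rw [← hN]
    apply Set.ncard_lt_ncard _ hfin
    refine ⟨fun c hc => ⟨hc.1, by linarith [hc.2.1, he.2.1], hc.2.2⟩, fun hh => ?_⟩
    have := (hh he).2.1
    linarith
  · exact h1 t u hPt htu fun c hc c1 c2 => hne ⟨c, hc, c1, c2⟩

end

section
variable {d : ℕ} {R : ℝ → ℝ → Prop}

def pre (d : ℕ) (D : Set ℝ) : Set ℝ := {x | (d : ℝ) * x ∈ D}

def Exo (d : ℕ) (R : ℝ → ℝ → Prop) (e : ℝ) : Prop :=
  ¬ ∃ n : ℤ, d * low R e e = low R (d * e) (d * e) + n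

theorem RL.dpos (h : RL d R) : (0 : ℝ) < d := by
  have := h.d2
  exact_mod_cast (by omega : 0 < d)

theorem RL.ratdiv (h : RL d R) {x : ℝ} (hx : R (d * x) (d * x)) : R x x := by
  have hd := h.dpos
  obtain ⟨q, hq⟩ := (h.rat _).1 hx
  refine (h.rat _).2 ⟨q / d, ?_⟩
  push_cast
  rw [hq]; field_simp

theorem LF.shift (h : RL d R) {D : Set ℝ} (hD : LF R D) {x : ℝ} (hx : x ∈ D) (n : ℤ) : x + n ∈ D :=
  hD.sat x hx _ (h.per _ _ _ (hD.self x hx))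

theorem LF.preLF (h : RL d R) {D : Set ℝ} (hD : LF R D) : LF R (pre d D) where
  self x hx := h.ratdiv (hD.self _ hx)
  sat x hx y hy := hD.sat _ hx _ (h.fwd _ _ hy)
  fin a b := by
    have hd := h.dpos
    refine Set.Finite.of_finite_image ((hD.fin (d * a) (d * b)).subset ?_)
      (f := fun x => (d : ℝ) * x) (fun x _ y _ hxy => ?_)
    · rintro _ ⟨x, ⟨hx, h1, h2⟩, rfl⟩
      exact ⟨hx, mul_le_mul_of_nonneg_left h1 hd.le, mul_le_mul_of_nonneg_left h2 hd.le⟩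
    · exact mul_left_cancel₀ hd.ne' hxy

theorem RL.low_dsame (h : RL d R) {D : Set ℝ} (hD : LF R D) {b x y : ℝ} (hb : b ∈ D)
    (hxy : x ≤ y) (hno : ∀ c ∈ pre d D, x ≤ c → c < y → False) :
    low R b (d * y) = low R b (d * x) := by
  have hd := h.dpos
  apply h.low_same (hD.self b hb) (mul_le_mul_of_nonneg_left hxy hd.le)
  intro c hc h1 h2
  refine hno (c / d) ?_ ?_ ?_
  · change (d : ℝ) * (c / d) ∈ D
    rw [mul_div_cancel₀ _ hd.ne']
    exact hD.sat b hb c hc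
  · rw [le_div_iff₀ hd]; linarith
  · rw [div_lt_iff₀ hd]; linarith

theorem RL.satD (h : RL d R) {D : Set ℝ} (hD : LF R D) {t f : ℝ} (hE : EE R D (d * t) f) :
    ∃ (t' : ℝ) (n : ℤ), EE R (pre d D) t t' ∧ d * t' = f + n := by
  have hd := h.dpos
  have hD' := hD.preLF h
  suffices H : ∀ u, d * t ≤ u → EE R D (d * t) u →
      ∃ (t' : ℝ) (n : ℤ), EE R (pre d D) t t' ∧ d * t' = u + n by
    obtain ⟨N, hN⟩ := exists_nat_ge (d * t - f)
    obtain ⟨t', n, h1, h2⟩ := H (f + (N : ℤ)) (by push_cast; linarith)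
      (hE.trans (h.EE_add hD.self f N))
    exact ⟨t', N + n, h1, by rw [h2]; push_cast; ring⟩
  intro u hu hEu
  refine h.walk hD (d * t) (fun u => ∃ (t' : ℝ) (n : ℤ), EE R (pre d D) t t' ∧ d * t' = u + n)
    ?_ ?_ u hu hEu ⟨t, 0, EE.refl _ _, by simp⟩
  · rintro t1 u ⟨t', n, h1, h2⟩ htu hno
    refine ⟨t' + (u - t1) / d, n, h1.trans (h.EE_same hD' ?_ ?_), ?_⟩
    · have : 0 ≤ (u - t1) / d := div_nonneg (by linarith) hd.le
      linarith
    · intro c hc c1 c2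
      refine hno (d * c + (-n : ℤ)) (hD.shift h hc _) ?_ ?_
      · have := mul_le_mul_of_nonneg_left c1 hd.le
        push_cast; linarith
      · have := mul_lt_mul_of_pos_left c2 hd
        rw [mul_add, mul_div_cancel₀ _ hd.ne'] at this
        push_cast; linarith
    · rw [mul_add, mul_div_cancel₀ _ hd.ne']; linarith
  · rintro b hb ⟨a, n, ha, han⟩ hEb e' hs hno
    by_contra hneg
    have hbb := hD.self b hb
    have haD : a ∈ pre d D := by
      change (d : ℝ) * a ∈ D
      rw [han]; exact hD.shift h hb n
    have star : ∀ e ∈ pre d D, EE R (pre d D) t e → R b (d * e) → ∀ e'', low R e e + 1 < e'' →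
        (∀ c ∈ pre d D, low R e e + 1 < c → c < e'' → False) → ¬ NS R b b (d * e'') := by
      rintro e he hte hbe e'' h1 h2 ⟨k, hk⟩
      have hee := hD'.self e he
      have hes : R e (low R e e + 1) := by
        have := h.per _ _ 1 (h.low_spec hee e).1; simpa using this
      have hbs : R b (d * (low R e e + 1)) := h.trans _ _ _ hbe (h.fwd _ _ hes)
      generalize hs' : low R e e + 1 = s' at *
      have hls := h.low_spec hbb (d * e'')
      have hle : d * s' ≤ low R b (d * e'') := hls.2.2 _ hbs (mul_lt_mul_of_pos_left h1 hd)
      have heq : low R b (d * e'') = d * s' := by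
        by_contra hne
        refine h2 (low R b (d * e'') / d) ?_ ?_ ?_
        · change (d : ℝ) * (_ / d) ∈ D
          rw [mul_div_cancel₀ _ hd.ne']
          exact hD.sat b hb _ hls.1
        · rw [lt_div_iff₀ hd, mul_comm]
          exact lt_of_le_of_ne hle (Ne.symm hne)
        · rw [div_lt_iff₀ hd, mul_comm e'']; exact hls.2.1
      apply hneg
      rw [heq] at hk
      refine ⟨s' + (e' - (low R b b + 1)) / d, k - 1, hte.trans (h.next hD' he ?_ ?_), ?_⟩
      · rw [hs']
        have : 0 < (e' - (low R b b + 1)) / d := div_pos (by linarith) hd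
        linarith
      · rw [hs']
        intro c hc c1 c2
        have c1' := mul_lt_mul_of_pos_left c1 hd
        have c2' := mul_lt_mul_of_pos_left c2 hd
        rw [mul_add, mul_div_cancel₀ _ hd.ne'] at c2'
        refine hno (d * c + ((1 - k : ℤ))) (hD.shift h hc _) ?_ ?_
        · push_cast; linarith
        · push_cast; linarith
      · rw [mul_add, mul_div_cancel₀ _ hd.ne']; push_cast; linarith
    obtain ⟨e0, g1, g2, g3⟩ := hD'.exists_right (lt_add_one (low R a a + 1))
    have hta0 : EE R (pre d D) t e0 := ha.trans (h.next hD' haD g1 g3)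
    have hba : R b (d * a) := by rw [han]; exact h.per _ _ _ hbb
    obtain ⟨N, hN⟩ := exists_nat_ge (e0 - a)
    have hfin := h.walk hD' e0 (fun x => ¬ NS R b b (d * x)) ?_ ?_ (a + (N : ℤ))
      (by push_cast; linarith)
      ((hta0.symm.trans ha).trans (h.EE_add hD'.self a N)) (star a haD ha hba e0 g1 g3)
    · apply hfin
      have := h.NS_add hbb b (n + d * N)
      convert this using 1
      push_cast; rw [mul_add, han]; ring
    · intro x y hx hxy hxno hh
      apply hx
      obtain ⟨k, hk⟩ := hh
      exact ⟨k, by rw [← hk, h.low_dsame hD hb hxy hxno]⟩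
    · intro e he hQ hEe e'' k1 k2 hh
      by_cases hbe : R b (d * e)
      · exact star e he (hta0.trans hEe) hbe e'' k1 k2 hh
      · have hee := hD'.self e he
        have hes : R e (low R e e + 1) := by
          have := h.per _ _ 1 (h.low_spec hee e).1; simpa using this
        have hds := h.fwd _ _ hes
        generalize low R e e + 1 = s' at *
        have hbs : ¬ R b (d * s') := fun hh => hbe (h.trans _ _ _ hh (h.symm _ _ hds))
        have heq : low R b (d * e'') = low R b (d * s') := by
          apply h.low_same hbb (mul_le_mul_of_nonneg_left k1.le hd.le)
          intro c hc c1 c2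
          refine k2 (c / d) ?_ ?_ ?_
          · change (d : ℝ) * (c / d) ∈ D
            rw [mul_div_cancel₀ _ hd.ne']
            exact hD.sat b hb c hc
          · rw [lt_div_iff₀ hd, mul_comm]
            exact lt_of_le_of_ne c1 fun e => hbs (e ▸ hc)
          · rw [div_lt_iff₀ hd, mul_comm e'']; exact c2
        have := h.classNS hbb hds hbe
        apply hQ
        obtain ⟨k, hk⟩ := hh
        exact NS.trans ⟨k, by rw [← heq, hk]⟩ this.symm

theorem RL.exoD (h : RL d R) {D : Set ℝ} (hD : LF R D) {t u : ℝ} (hE : EE R (pre d D) t u)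
    (hn : ¬ EE R D (d * t) (d * u)) :
    ∃ e ∈ pre d D, Exo d R e ∧ EE R D (d * t) (d * e) := by
  have hd := h.dpos
  have hD' := hD.preLF h
  by_contra hneg
  push Not at hneg
  obtain ⟨N, hN⟩ := exists_nat_ge (t - u)
  have hsh : EE R D (d * u) (d * (u + (N : ℤ))) := by
    convert h.EE_add hD.self (d * u) (d * N) using 1
    push_cast; ring
  refine hn (EE.trans ?_ hsh.symm)
  refine h.walk hD' t (fun x => EE R D (d * t) (d * x)) ?_ ?_ (u + (N : ℤ))
    (by push_cast; linarith) (hE.trans (h.EE_add hD'.self u N)) (EE.refl _ _)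
  · intro x y hx hxy hno
    exact hx.trans fun b hb => ⟨0, by simpa using h.low_dsame hD hb hxy hno⟩
  · intro e he hP _ e'' k1 k2
    have hex : ¬ Exo d R e := fun hh => hneg e he hh hP
    unfold Exo at hex
    push Not at hex
    obtain ⟨n, hn⟩ := hex
    have hnx : EE R D (d * e) (d * e'' + ((1 - n - d : ℤ))) := by
      apply h.next hD he
      · have := mul_lt_mul_of_pos_left k1 hd
        push_cast; linarith
      · intro c hc c1 c2
        refine k2 ((c + ((n + d - 1 : ℤ))) / d) ?_ ?_ ?_
        · change (d : ℝ) * (_ / d) ∈ D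
          rw [mul_div_cancel₀ _ hd.ne']
          exact hD.shift h hc _
        · rw [lt_div_iff₀ hd]; push_cast; linarith
        · rw [div_lt_iff₀ hd]; push_cast at c2 ⊢; linarith
    exact (hP.trans hnx).trans (h.EE_add hD.self _ _).symm
end

section
variable {d : ℕ} {R : ℝ → ℝ → Prop}

theorem RL.exoFacts (h : RL d R) {z : ℝ} (hz : R z z) (hex : Exo d R z) :
    ∃ Y : ℝ, Y = low R z z + 1 ∧ ∃ k : ℤ, k = ⌊d * (Y - z)⌋ ∧ 1 ≤ k ∧ k + 2 ≤ d ∧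
      ∃ w, R z w ∧ z ≤ w ∧ w ≤ Y ∧ d * (w - z) < k ∧ d * (Y - w) < k := by
  have hd := h.dpos
  obtain ⟨l1, l2, l3⟩ := h.low_spec hz z
  have l4 := h.low_ge hz z
  have hzY : R z (low R z z + 1) := by have := h.per _ _ 1 l1; simpa using this
  refine ⟨_, rfl, _, rfl, ?_⟩
  have hYdef : low R z z = (low R z z + 1) - 1 := by ring
  unfold Exo at hex
  generalize low R z z + 1 = Y at *
  rw [hYdef] at hex l1 l2 l3
  have hb : R (d * z) (d * z) := h.fwd _ _ hz
  obtain ⟨m1, m2, m3⟩ := h.low_spec hb (d * z)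
  have m4 := h.low_ge hb (d * z)
  obtain ⟨g, hg⟩ : ∃ g, g = low R (d * z) (d * z) + 1 - d * z := ⟨_, rfl⟩
  have hlow : low R (d * z) (d * z) = d * z + g - 1 := by rw [hg]; ring
  rw [hlow] at hex m1 m2 m3 m4
  have hbg : R (d * z) (d * z + g) := by
    have := h.per _ _ 1 m1
    rwa [show d * z + g - 1 + ((1 : ℤ) : ℝ) = d * z + g by push_cast; ring] at this
  obtain ⟨w0, hw0, n, hn⟩ := h.onto _ _ hbg
  obtain ⟨w, m, hwm, hw1, hw2⟩ : ∃ (w : ℝ) (m : ℤ), w = w0 + m ∧ z ≤ w ∧ w < z + 1 := by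
    refine ⟨_, ⌈z - w0⌉, rfl, ?_, ?_⟩
    · have := Int.le_ceil (z - w0); linarith
    · have := Int.ceil_lt_add_one (z - w0); linarith
  have hzw : R z w := by rw [hwm]; exact h.per _ _ _ hw0
  have hwY : w ≤ Y := by
    have := l3 (w + (-1 : ℤ)) (h.per _ _ _ hzw) (by push_cast; linarith)
    push_cast at this; linarith
  obtain ⟨k2, hk2⟩ : ∃ k2 : ℤ, d * (w - z) = g + k2 := ⟨n + d * m, by
    rw [hwm]; push_cast; linear_combination hn⟩
  have hf1 := Int.floor_le (d * (Y - z))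
  have hf2 := Int.lt_floor_add_one (d * (Y - z))
  generalize ⌊d * (Y - z)⌋ = k at *
  have hbeta : d * (Y - z) - k ≤ g := by
    have := m3 (d * Y + (-k - 1 : ℤ)) (h.per _ _ _ (h.fwd _ _ hzY)) (by push_cast; linarith)
    push_cast at this; linarith
  have hbeta' : d * (Y - z) - k < g := by
    refine lt_of_le_of_ne hbeta fun he => hex ⟨k + 1 - d, ?_⟩
    push_cast; linear_combination he
  have hmono : d * (w - z) ≤ d * (Y - z) := mul_le_mul_of_nonneg_left (by linarith) hd.le
  have hk3 : k2 + 1 ≤ k := by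
    have : (k2 : ℝ) < k := by linarith
    exact_mod_cast this
  have hk3' : (k2 : ℝ) + 1 ≤ k := by exact_mod_cast hk3
  have hk4 : 0 ≤ k2 := by
    have h0 : 0 ≤ d * (w - z) := mul_nonneg hd.le (by linarith)
    have : (-1 : ℝ) < k2 := by linarith
    have : (-1 : ℤ) < k2 := by exact_mod_cast this
    omega
  have hk4' : (0 : ℝ) ≤ k2 := by exact_mod_cast hk4
  refine ⟨by omega, ?_, w, hzw, hw1, hwY, by linarith, by linarith⟩
  have hkd : k < d := by
    have : d * (Y - z) < d * 1 := mul_lt_mul_of_pos_left (by linarith) hd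
    have : (k : ℝ) < d := by linarith
    exact_mod_cast this
  by_contra hcon
  have hkeq : k = d - 1 := by omega
  have hkeq' : (k : ℝ) = d - 1 := by rw [hkeq]; push_cast; ring
  obtain ⟨u, hu⟩ : ∃ u, u = Y + (g - (d * (Y - z) - k)) / d := ⟨_, rfl⟩
  have hdu : d * u = d * z + g + k := by
    rw [hu, mul_add, mul_div_cancel₀ _ hd.ne']; ring
  have huY : Y < u := by
    have : 0 < (g - (d * (Y - z) - k)) / d := div_pos (by linarith) hd
    linarith
  have huz : u < z + 1 := by
    have : d * u < d * (z + 1) := by linarith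
    exact lt_of_mul_lt_mul_left this hd.le
  have hbdu : R (d * z) (d * u) := by rw [hdu]; exact h.per _ _ _ hbg
  have huu : R u u := h.ratdiv (h.right hbdu)
  obtain ⟨q, hq, n', hn'⟩ := h.onto _ _ (h.symm _ _ hbdu)
  have hgap : ∀ c, R z c → c < z + 1 → c ≤ Y := fun c hc hc1 => by
    have := l3 (c + (-1 : ℤ)) (h.per _ _ _ hc) (by push_cast; linarith)
    push_cast at this; linarith
  have hzu : ¬ R z u := fun hh => by have := hgap u hh huz; linarith
  obtain ⟨j, hj⟩ := h.classNS hz hq hzu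
  rw [h.low_eq hzY huY (fun c hc hcu => hgap c hc (by linarith))] at hj
  have hq' : low R z (q + (-j : ℤ)) = Y := by rw [h.low_add hz, hj]; push_cast; ring
  have hs := h.low_spec hz (q + (-j : ℤ))
  rw [hq'] at hs
  have hq1 : q + (-j : ℤ) < z + 1 := by
    refine lt_of_le_of_ne ?_ fun he => ?_
    · by_contra hc
      have := hs.2.2 (z + (1 : ℤ)) (h.per _ _ _ hz) (by push_cast at *; linarith)
      push_cast at this
      linarith
    · apply hzu
      have h1 : R z (q + (-j : ℤ)) := by
        rw [he]; have := h.per _ _ 1 hz; simpa using this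
      exact h.trans _ _ _ h1 (h.symm _ _ (h.per _ _ _ hq))
  have e1 := mul_lt_mul_of_pos_left hq1 hd
  have e2 := mul_lt_mul_of_pos_left hs.2.1 hd
  have e3 : (n' - d * j : ℝ) < d := by push_cast at e1; linarith
  have e4 : (d - 1 : ℝ) < (n' - d * j : ℝ) := by push_cast at e2; linarith
  have e3' : n' - d * j < (d : ℤ) := by exact_mod_cast e3
  have e4' : (d : ℤ) - 1 < n' - d * j := by exact_mod_cast e4
  omega

theorem RL.exoFin (h : RL d R) : {z | z ∈ Ico (0 : ℝ) 1 ∧ R z z ∧ Exo d R z}.Finite := by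
  have hd := h.dpos
  by_contra hinf
  have hinf : {z | z ∈ Ico (0 : ℝ) 1 ∧ R z z ∧ Exo d R z}.Infinite := hinf
  let Y : ℝ → ℝ := fun z => low R z z + 1
  have key : ∀ z z', R z z → Exo d R z → R z' z' → Exo d R z' → z < z' →
      ⌊d * (Y z - z)⌋ = ⌊d * (Y z' - z')⌋ → 3 * (d * (z' - z)) < 1 →
      |3 * (d * (Y z' - Y z))| < 1 → False := by
    intro z z' hz hez hz' hez' hlt hk h1 h2
    obtain ⟨Y1, hY1, k, hk1, hk2, hk3, w, hw, hw1, hw2, hw3, hw4⟩ := h.exoFacts hz hez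
    obtain ⟨Y2, hY2, k', hk1', hk2', hk3', -⟩ := h.exoFacts hz' hez'
    have hYY : Y z = Y1 := hY1.symm
    have hYY' : Y z' = Y2 := hY2.symm
    rw [hYY, hYY'] at hk h2
    have hkk : k = k' := by rw [hk1, hk1', hk]
    have f1 := Int.lt_floor_add_one (d * (Y1 - z))
    have f2 := Int.floor_le (d * (Y1 - z))
    have f3 := Int.floor_le (d * (Y2 - z'))
    rw [← hk1] at f1 f2
    rw [← hk1', ← hkk] at f3
    have hk2r : (1 : ℝ) ≤ k := by exact_mod_cast hk2
    have hk3r : (k : ℝ) + 2 ≤ d := by exact_mod_cast hk3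
    obtain ⟨h2a, h2b⟩ := abs_lt.1 h2
    have l1 := h.low_spec hz z
    have l1' := h.low_spec hz' z'
    have l2 := h.low_ge hz z
    have l2' := h.low_ge hz' z'
    have hzY : R z Y1 := by rw [hY1]; have := h.per _ _ 1 l1.1; simpa using this
    have hzY' : R z' Y2 := by rw [hY2]; have := h.per _ _ 1 l1'.1; simpa using this
    have dlt : ∀ {a b : ℝ}, d * a < d * b → a < b := fun hh => lt_of_mul_lt_mul_left hh hd.le
    have dlt' : ∀ {a b : ℝ}, a ≤ b → d * a ≤ d * b := fun hh => mul_le_mul_of_nonneg_left hh hd.le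
    by_cases hzz : R z z'
    · have := l1'.2.2 z (h.symm _ _ hzz) hlt
      have := dlt' (show z + 1 ≤ Y2 by linarith)
      linarith
    · have hne : ∀ c, R z c → R z' c → False := fun c c1 c2 => hzz (h.trans _ _ _ c1 (h.symm _ _ c2))
      rcases lt_trichotomy Y1 Y2 with hY | hY | hY
      · apply hzz
        exact h.nc z Y1 z' Y2 hzY hzY' hlt (dlt (by linarith)) hY (dlt (by linarith))
      · exact hne Y1 hzY (hY ▸ hzY')
      · rcases lt_or_ge w z' with hc | hc
        · have := dlt' (show Y2 - z' ≤ Y1 - w by linarith)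
          linarith
        rcases lt_or_ge Y2 w with hc' | hc'
        · have := dlt' (show Y2 - z' ≤ w - z by linarith)
          linarith
        have c1 : z' < w := lt_of_le_of_ne hc fun e => hne w hw (e ▸ hz')
        have c2 : w < Y2 := lt_of_le_of_ne hc' fun e => hne w hw (e ▸ hzY')
        have := h.nc z' Y2 w Y1 hzY' (h.trans _ _ _ (h.symm _ _ hw) hzY) c1 c2 hY (by linarith)
        exact hne w hw this
  have hmaps : MapsTo (fun z => ((⌊d * (Y z - z)⌋, ⌊3 * (d * z)⌋, ⌊3 * (d * Y z)⌋) : ℤ × ℤ × ℤ))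
      {z | z ∈ Ico (0 : ℝ) 1 ∧ R z z ∧ Exo d R z}
      (Icc (0 : ℤ) d ×ˢ (Icc (0 : ℤ) (3 * d) ×ˢ Icc (0 : ℤ) (6 * d))) := by
    rintro z ⟨⟨hz0, hz1⟩, hz, -⟩
    have l1 := h.low_spec hz z
    have l2 := h.low_ge hz z
    have a1 : z ≤ Y z := l2
    have a2 : Y z < z + 1 := by change low R z z + 1 < z + 1; linarith [l1.2.1]
    have b1 : 0 ≤ d * (Y z - z) := mul_nonneg hd.le (by linarith)
    have b2 : d * (Y z - z) ≤ d * 1 := mul_le_mul_of_nonneg_left (by linarith) hd.le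
    have b3 : 0 ≤ d * z := mul_nonneg hd.le hz0
    have b4 : d * z ≤ d * 1 := mul_le_mul_of_nonneg_left (by linarith) hd.le
    refine ⟨⟨Int.floor_nonneg.2 b1, ?_⟩, ⟨Int.floor_nonneg.2 (by linarith), ?_⟩,
      ⟨Int.floor_nonneg.2 (by linarith), ?_⟩⟩
    · have : (⌊d * (Y z - z)⌋ : ℝ) ≤ d := (Int.floor_le _).trans (by linarith)
      exact_mod_cast this
    · have : (⌊3 * (d * z)⌋ : ℝ) ≤ 3 * d := (Int.floor_le _).trans (by linarith)
      exact_mod_cast this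
    · have : (⌊3 * (d * Y z)⌋ : ℝ) ≤ 6 * d := (Int.floor_le _).trans (by linarith)
      exact_mod_cast this
  have hfin : (Icc (0 : ℤ) d ×ˢ (Icc (0 : ℤ) (3 * d) ×ˢ Icc (0 : ℤ) (6 * d))).Finite :=
    (finite_Icc _ _).prod ((finite_Icc _ _).prod (finite_Icc _ _))
  obtain ⟨z, hz, z', hz', hne, heq⟩ := hinf.exists_ne_map_eq_of_mapsTo hmaps hfin
  simp only [Prod.mk.injEq] at heq
  obtain ⟨q1, q2, q3⟩ := heq
  have r2 := Int.abs_sub_lt_one_of_floor_eq_floor q2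
  have r3 := Int.abs_sub_lt_one_of_floor_eq_floor q3
  rcases lt_or_gt_of_ne hne with hlt | hlt
  · refine key z z' hz.2.1 hz.2.2 hz'.2.1 hz'.2.2 hlt q1 ?_ ?_
    · have := (abs_lt.1 r2).1; linarith
    · rw [abs_sub_comm] at r3
      rwa [show 3 * (d * (Y z' - Y z)) = 3 * (d * Y z') - 3 * (d * Y z) by ring]
  · refine key z' z hz'.2.1 hz'.2.2 hz.2.1 hz.2.2 hlt q1.symm ?_ ?_
    · have := (abs_lt.1 r2).2; linarith
    · rwa [show 3 * (d * (Y z - Y z')) = 3 * (d * Y z) - 3 * (d * Y z') by ring]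
end

section
variable {d : ℕ} {R : ℝ → ℝ → Prop}

theorem finite_choice {α : Type*} {S : Set α} (hS : S.Finite) (P : ℕ → α → Prop)
    (hmono : ∀ k l c, k ≤ l → P l c → P k c) (hex : ∀ k, ∃ c ∈ S, P k c) :
    ∃ c ∈ S, ∀ k, P k c := by
  by_contra hcon
  push Not at hcon
  choose! K hK using hcon
  obtain ⟨M, hM⟩ := (hS.image K).bddAbove
  obtain ⟨c, hc, hPc⟩ := hex M
  exact hK c hc (hmono _ _ _ (hM ⟨c, hc, rfl⟩) hPc)

def QQ (R : ℝ → ℝ → Prop) : Set ℝ := {x | R x x}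

def stage (R : ℝ → ℝ → Prop) (f : ℕ → ℚ) (k : ℕ) : Set ℝ := {y | ∃ i < k, R (f i) y}

theorem RL.stageLF (h : RL d R) (f : ℕ → ℚ) (k : ℕ) : LF R (stage R f k) where
  self := by
    rintro x ⟨i, _, hi⟩
    exact h.right hi
  sat := by
    rintro x ⟨i, hik, hi⟩ y hy
    exact ⟨i, hik, h.trans _ _ _ hi hy⟩
  fin a b := by
    refine ((Set.finite_Iio k).biUnion (fun i _ => h.fin (f i) a b)).subset ?_
    rintro x ⟨⟨i, hik, hi⟩, hx⟩
    simp only [mem_iUnion]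
    exact ⟨i, hik, hi, hx⟩

theorem RL.EE_stage (h : RL d R) {f : ℕ → ℚ} (hf : Surjective f) {t u : ℝ}
    (hE : ∀ k, EE R (stage R f k) t u) : EE R (QQ R) t u := by
  intro x hx
  obtain ⟨q, hq⟩ := (h.rat x).1 hx
  obtain ⟨i, hi⟩ := hf q
  exact hE (i + 1) x ⟨i, Nat.lt_succ_self i, by rw [hi, hq]; exact hx⟩

theorem RL.EE_prestage (h : RL d R) {f : ℕ → ℚ} (hf : Surjective f) {t u : ℝ}
    (hE : ∀ k, EE R (pre d (stage R f k)) t u) : EE R (QQ R) t u := by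
  intro x hx
  have hx' := h.fwd _ _ hx
  obtain ⟨q, hq⟩ := (h.rat _).1 hx'
  obtain ⟨i, hi⟩ := hf q
  exact hE (i + 1) x ⟨i, Nat.lt_succ_self i, by rw [hi, hq]; exact hx'⟩

theorem EE.mono {D D' : Set ℝ} {t u : ℝ} (hs : D ⊆ D') (hE : EE R D' t u) : EE R D t u :=
  fun x hx => hE x (hs hx)

theorem stage_mono {f : ℕ → ℚ} {k l : ℕ} (hkl : k ≤ l) : stage R f k ⊆ stage R f l := by
  rintro x ⟨i, hi, hx⟩
  exact ⟨i, hi.trans_le hkl, hx⟩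

theorem RL.EEQ_add (h : RL d R) (t : ℝ) (n : ℤ) : EE R (QQ R) t (t + n) :=
  h.EE_add (fun _ hx => hx) t n

theorem RL.satQ (h : RL d R) {t v : ℝ} (hE : EE R (QQ R) (d * t) v) :
    ∃ (t' : ℝ) (n : ℤ), EE R (QQ R) t t' ∧ d * t' = v + n := by
  have hd := h.dpos
  have hdz : (0 : ℤ) < d := by exact_mod_cast hd
  obtain ⟨f, hf⟩ := exists_surjective_nat ℚ
  obtain ⟨n, -, hn⟩ := finite_choice (finite_Icc (0 : ℤ) d)
    (fun k n => EE R (pre d (stage R f k)) t ((v + n) / d))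
    (fun k l c hkl => EE.mono fun x hx => stage_mono hkl hx) (by
      intro k
      have hLF := h.stageLF f k
      obtain ⟨t', n, h1, h2⟩ := h.satD hLF (hE.mono hLF.self)
      refine ⟨n % d, ⟨Int.emod_nonneg _ hdz.ne', (Int.emod_lt_of_pos _ hdz).le⟩, ?_⟩
      convert h1.trans (h.EE_add (hLF.preLF h).self t' (-(n / d))) using 1
      have := Int.emod_add_mul_ediv n d
      have : ((n % d : ℤ) : ℝ) = n - d * (n / d : ℤ) := by
        rw [eq_sub_iff_add_eq]; exact_mod_cast this
      rw [this, div_eq_iff hd.ne']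
      push_cast
      linear_combination -h2)
  exact ⟨_, n, h.EE_prestage hf hn, by rw [mul_div_cancel₀ _ hd.ne']⟩

theorem RL.Exo_shift (h : RL d R) {e : ℝ} (he : R e e) (hx : Exo d R e) (n : ℤ) :
    Exo d R (e + n) := by
  rintro ⟨m, hm⟩
  apply hx
  have h1 : low R (e + n) (e + n) = low R e e + n := by
    rw [← h.low_congr (h.per _ _ n he), h.low_add he]
  have h2 : low R (d * (e + n)) (d * (e + n)) = low R (d * e) (d * e) + d * n := by
    have hde := h.fwd _ _ he
    have : d * (e + n) = d * e + ((d * n : ℤ) : ℝ) := by push_cast; ring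
    rw [this, ← h.low_congr (h.per _ _ (d * n) hde), h.low_add hde]; push_cast; ring
  rw [h1, h2] at hm
  exact ⟨m, by linarith⟩

theorem RL.exoQ (h : RL d R) {t u : ℝ} (hE : EE R (QQ R) t u)
    (hn : ¬ EE R (QQ R) (d * t) (d * u)) :
    ∃ e ∈ Ico (0 : ℝ) 1, R e e ∧ Exo d R e ∧ EE R (QQ R) (d * t) (d * e) := by
  obtain ⟨f, hf⟩ := exists_surjective_nat ℚ
  obtain ⟨k0, hk0⟩ : ∃ k, ¬ EE R (stage R f k) (d * t) (d * u) := by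
    by_contra hc
    push Not at hc
    exact hn (h.EE_stage hf hc)
  obtain ⟨e, he, hP⟩ := finite_choice h.exoFin
    (fun k e => EE R (stage R f k) (d * t) (d * e))
    (fun k l c hkl => EE.mono (stage_mono hkl)) (by
      intro k
      have hLF := h.stageLF f (k + k0)
      obtain ⟨e, he, hx, hEe⟩ := h.exoD hLF
        (hE.mono (hLF.preLF h).self)
        (fun hh => hk0 (hh.mono (stage_mono (Nat.le_add_left _ _))))
      have hee := (hLF.preLF h).self e he
      refine ⟨e + (-⌊e⌋ : ℤ), ⟨⟨?_, ?_⟩, ?_, h.Exo_shift hee hx _⟩, ?_⟩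
      · have := Int.floor_le e; push_cast; linarith
      · have := Int.lt_floor_add_one e; push_cast; linarith
      · exact h.right (h.per _ _ _ hee)
      · refine EE.mono (stage_mono (Nat.le_add_right k k0)) (hEe.trans ?_)
        convert h.EE_add hLF.self (d * e) (d * (-⌊e⌋)) using 1
        push_cast; ring)
  exact ⟨e, he.1, he.2.1, he.2.2, h.EE_stage hf hP⟩

/-- unlinkedness of the gap classes -/
theorem RL.EE_nc (h : RL d R) {t1 t2 u1 u2 : ℝ} (ht : EE R (QQ R) t1 t2) (hu : EE R (QQ R) u1 u2)
    (h1 : t1 < u1) (h2 : u1 < t2) (h3 : t2 < u2) (h4 : u2 < t1 + 1) : EE R (QQ R) t1 u1 := by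
  intro x hx
  obtain ⟨n, hn⟩ := ht x hx
  obtain ⟨m, hm⟩ := hu x hx
  have l1 := h.low_mono hx h1.le
  have l2 := h.low_mono hx h2.le
  have l3 := h.low_mono hx h3.le
  have l4 := h.low_mono hx h4.le
  have l5 := h.low_add hx t1 1
  push_cast at l5
  rw [l5] at l4
  rcases le_or_gt n 0 with hn0 | hn0
  · have : (n : ℝ) ≤ 0 := by exact_mod_cast hn0
    exact ⟨0, by push_cast; linarith⟩
  · have hn1 : (1 : ℝ) ≤ n := by exact_mod_cast hn0
    exact ⟨1 - m, by push_cast; linarith⟩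
end

section
variable {d : ℕ}

theorem coe_eq_iff (x y : ℝ) : (x : Circle1) = (y : Circle1) ↔ ∃ n : ℤ, y = x + n := by
  constructor
  · intro h
    have : ((y - x : ℝ) : Circle1) = 0 := by
      rw [AddCircle.coe_sub, h, sub_self]
    obtain ⟨n, hn⟩ := (AddCircle.coe_eq_zero_iff (1 : ℝ)).1 this
    exact ⟨n, by simp at hn; linarith⟩
  · rintro ⟨n, rfl⟩
    have : ((n : ℝ) : Circle1) = 0 := (AddCircle.coe_eq_zero_iff (1 : ℝ)).2 ⟨n, by simp⟩
    rw [AddCircle.coe_add, this, add_zero]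

theorem coe_add_int (x : ℝ) (n : ℤ) : ((x + n : ℝ) : Circle1) = (x : Circle1) :=
  ((coe_eq_iff x (x + n)).2 ⟨n, rfl⟩).symm

theorem coe_surj (c : Circle1) : ∃ x : ℝ, (x : Circle1) = c := QuotientAddGroup.mk_surjective c

theorem md_coe (d : ℕ) (x : ℝ) : md d (x : Circle1) = ((d * x : ℝ) : Circle1) := by
  unfold md
  rw [← nsmul_eq_mul, AddCircle.coe_nsmul]

theorem rep_in (c : Circle1) (p : ℝ) : ∃ x : ℝ, (x : Circle1) = c ∧ p < x ∧ x ≤ p + 1 := by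
  obtain ⟨x, rfl⟩ := coe_surj c
  refine ⟨x + ⌊p + 1 - x⌋, coe_add_int _ _, ?_, ?_⟩
  · have := Int.lt_floor_add_one (p + 1 - x); linarith
  · have := Int.floor_le (p + 1 - x); linarith

theorem isOpen_coe {U : Set ℝ} (hU : IsOpen U) : IsOpen ((fun x : ℝ => (x : Circle1)) '' U) :=
  QuotientAddGroup.isOpenMap_coe U hU

theorem sep {C : Set Circle1} (hC : IsPreconnected C) {p q y1 y2 : ℝ} (hp : (p : Circle1) ∉ C)
    (hq : (q : Circle1) ∉ C) (h1 : p < y1) (h2 : y1 < q) (h3 : q < y2) (h4 : y2 < p + 1)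
    (hy1 : (y1 : Circle1) ∈ C) (hy2 : (y2 : Circle1) ∈ C) : False := by
  obtain ⟨c, hc, ⟨a, ha, rfl⟩, ⟨b, hb, hab⟩⟩ := hC _ _ (isOpen_coe (isOpen_Ioo (a := p) (b := q)))
    (isOpen_coe (isOpen_Ioo (a := q) (b := p + 1))) (by
      intro c hc
      obtain ⟨x, rfl, hx1, hx2⟩ := rep_in c p
      rcases lt_trichotomy x q with h | h | h
      · exact Or.inl ⟨x, ⟨hx1, h⟩, rfl⟩
      · exact absurd (h ▸ hc) hq
      · refine Or.inr ⟨x, ⟨h, lt_of_le_of_ne hx2 fun e => hp ?_⟩, rfl⟩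
        rw [e] at hc
        have := coe_add_int p 1
        push_cast at this
        rwa [this] at hc)
    ⟨_, hy1, y1, ⟨h1, h2⟩, rfl⟩ ⟨_, hy2, y2, ⟨h3, h4⟩, rfl⟩
  obtain ⟨n, hn⟩ := (coe_eq_iff b a).1 hab
  have e1 : (-1 : ℝ) < n := by linarith [ha.1, hb.2]
  have e2 : (n : ℝ) < 0 := by linarith [ha.2, hb.1]
  have e1' : (-1 : ℤ) < n := by exact_mod_cast e1
  have e2' : n < 0 := by exact_mod_cast e2
  omega

def RR (lam : InvRatLam d) (x y : ℝ) : Prop := lam.rel (x : Circle1) (y : Circle1)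

theorem ratC_coe (x : ℝ) : (x : Circle1) ∈ ratC ↔ ∃ q : ℚ, (q : ℝ) = x := by
  constructor
  · rintro ⟨q, hq⟩
    obtain ⟨n, hn⟩ := (coe_eq_iff _ _).1 hq
    exact ⟨q - n, by push_cast; linarith⟩
  · rintro ⟨q, rfl⟩
    exact ⟨q, rfl⟩

theorem RR_self (lam : InvRatLam d) (x : ℝ) : RR lam x x ↔ (x : Circle1) ∈ ratC :=
  ⟨fun h => (lam.rel_rat _ _ h).1, lam.refl _⟩

theorem RR_RL (hd : 2 ≤ d) (lam : InvRatLam d) : RL d (RR lam) where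
  d2 := hd
  rat x := by rw [RR_self, ratC_coe]
  symm x y := lam.symm _ _
  trans x y z := lam.trans _ _ _
  per x y n h := by
    unfold RR
    rwa [coe_add_int]
  fin x a b := by
    refine ((lam.finiteClass x).biUnion (t := fun c => {y : ℝ | (y : Circle1) = c ∧ y ∈ Icc a b})
      (fun c _ => ?_)).subset ?_
    · obtain ⟨z, rfl⟩ := coe_surj c
      refine ((finite_Icc ⌊a - z⌋ ⌈b - z⌉).image fun n : ℤ => z + n).subset ?_
      rintro y ⟨hy, hy1, hy2⟩
      obtain ⟨n, hn⟩ := (coe_eq_iff _ _).1 hy.symm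
      refine ⟨n, ⟨?_, ?_⟩, hn.symm⟩
      · have := Int.floor_le (a - z)
        have : ((⌊a - z⌋ : ℤ) : ℝ) ≤ n := by linarith
        exact_mod_cast this
      · have := Int.le_ceil (b - z)
        have : (n : ℝ) ≤ (⌈b - z⌉ : ℤ) := by linarith
        exact_mod_cast this
    · rintro y ⟨hy, hy'⟩
      simp only [mem_iUnion]
      exact ⟨y, hy, rfl, hy'⟩
  nc x1 x2 y1 y2 hx hy h1 h2 h3 h4 := by
    by_contra hn
    obtain ⟨c, hc, hsub⟩ := lam.unlinkedClass _ _ hn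
    have hcc : connectedComponentIn (relClass lam.rel (x1 : Circle1))ᶜ c ⊆ _ :=
      connectedComponentIn_subset _ _
    refine sep (isPreconnected_connectedComponentIn (x := c)
      (F := (relClass lam.rel (x1 : Circle1))ᶜ)) (p := x1) (q := x2) ?_ ?_ h1 h2 h3 h4
      (hsub ?_) (hsub ?_)
    · exact fun hh => hcc hh (lam.trans _ _ _ hx (lam.symm _ _ hx))
    · exact fun hh => hcc hh hx
    · exact lam.trans _ _ _ hy (lam.symm _ _ hy)
    · exact hy
  fwd x y h := by
    unfold RR
    rw [← md_coe, ← md_coe]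
    have := (lam.invariant _ (lam.rel_rat _ _ h).1).1
    have h2 : md d (y : Circle1) ∈ relClass lam.rel (md d (x : Circle1)) := by
      rw [← this]; exact ⟨_, h, rfl⟩
    exact h2
  onto x y h := by
    have hd0 : (d : ℝ) ≠ 0 := by
      have : d ≠ 0 := by omega
      exact_mod_cast this
    have hx : (x : Circle1) ∈ ratC := by
      obtain ⟨q, hq⟩ := (ratC_coe _).1 (lam.rel_rat _ _ h).1
      refine (ratC_coe x).2 ⟨q / d, ?_⟩
      push_cast; rw [hq]; field_simp
    have := (lam.invariant _ hx).1
    have h2 : (y : Circle1) ∈ relClass lam.rel (md d (x : Circle1)) := by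
      rw [md_coe]; exact h
    rw [← this] at h2
    obtain ⟨w, hw, hwy⟩ := h2
    obtain ⟨w, rfl⟩ := coe_surj w
    rw [md_coe] at hwy
    obtain ⟨n, hn⟩ := (coe_eq_iff _ _).1 hwy.symm
    exact ⟨w, hw, n, hn⟩

theorem comp_iff (hd : 2 ≤ d) (lam : InvRatLam d) {y x x' : ℝ} (hy : RR lam y y)
    (hx : ¬ RR lam y x) (hx' : ¬ RR lam y x') :
    (x' : Circle1) ∈ connectedComponentIn (relClass lam.rel (y : Circle1))ᶜ (x : Circle1) ↔
      NS (RR lam) y x x' := by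
  have h := RR_RL hd lam
  have path : ∀ a b : ℝ, ¬ RR lam y a → ¬ RR lam y b → a ≤ b → low (RR lam) y b = low (RR lam) y a →
      ∃ S : Set Circle1, IsPreconnected S ∧ (a : Circle1) ∈ S ∧ (b : Circle1) ∈ S ∧
        S ⊆ (relClass lam.rel (y : Circle1))ᶜ := by
    intro a b ha hb hab hl
    refine ⟨(fun x : ℝ => (x : Circle1)) '' Icc a b, isPreconnected_Icc.image _
      (AddCircle.continuous_mk' 1).continuousOn, ⟨a, ⟨le_rfl, hab⟩, rfl⟩, ⟨b, ⟨hab, le_rfl⟩, rfl⟩, ?_⟩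
    rintro _ ⟨c, ⟨hc1, hc2⟩, rfl⟩ hc
    have hc : RR lam y c := hc
    have h1 : c < b := lt_of_le_of_ne hc2 fun e => hb (e ▸ hc)
    have h2 := (h.low_spec hy b).2.2 c hc h1
    have h3 := (h.low_spec hy a).2.1
    linarith
  constructor
  · intro hmem
    obtain ⟨l1, l2, l3⟩ := h.low_spec hy x
    have l4 := h.low_ge hy x
    set u := low (RR lam) y x with hu
    obtain ⟨z, hz, hz1, hz2⟩ := rep_in (x' : Circle1) u
    obtain ⟨n, hn⟩ := (coe_eq_iff _ _).1 hz.symm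
    have hcc : connectedComponentIn (relClass lam.rel (y : Circle1))ᶜ (x : Circle1) ⊆ _ :=
      connectedComponentIn_subset _ _
    have hzc : ¬ RR lam y z := by unfold RR; rw [hz]; exact hx'
    suffices H : low (RR lam) y z = u by
      rw [hn, h.low_add hy] at H
      exact ⟨-n, by push_cast; linarith⟩
    obtain ⟨m1, m2, m3⟩ := h.low_spec hy z
    by_contra hne
    have huc : u < low (RR lam) y z := lt_of_le_of_ne (m3 u l1 hz1) (Ne.symm hne)
    have hxc : x < low (RR lam) y z := by
      by_contra hc
      rcases eq_or_lt_of_le (not_lt.1 hc) with e | e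
      · exact hx (e ▸ m1)
      · exact absurd (l3 _ m1 e) (not_le.2 huc)
    refine sep (isPreconnected_connectedComponentIn (x := (x : Circle1))
      (F := (relClass lam.rel (y : Circle1))ᶜ)) (p := u) (q := low (RR lam) y z) (y1 := x) (y2 := z)
      (fun hh => hcc hh l1) (fun hh => hcc hh m1) l2 hxc m2 (lt_of_le_of_ne hz2 fun e => hzc ?_)
      (mem_connectedComponentIn hx) (by rw [hz]; exact hmem)
    rw [e]
    have := h.per _ _ 1 l1
    simpa using this
  · rintro ⟨n, hn⟩
    have hx'' : ¬ RR lam y (x' + (-n : ℤ)) := by rwa [h.per_iff]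
    have hl : low (RR lam) y (x' + (-n : ℤ)) = low (RR lam) y x := by
      rw [h.low_add hy, hn]; push_cast; ring
    rw [← coe_add_int x' (-n)]
    rcases le_total x (x' + (-n : ℤ)) with hle | hle
    · obtain ⟨S, hS, h1, h2, h3⟩ := path _ _ hx hx'' hle hl
      exact hS.subset_connectedComponentIn h1 h3 h2
    · obtain ⟨S, hS, h1, h2, h3⟩ := path _ _ hx'' hx hle hl.symm
      exact hS.subset_connectedComponentIn h2 h3 h1

theorem unl_iff (hd : 2 ≤ d) (lam : InvRatLam d) (x x' : ℝ) :
    UnlRel lam.rel (x : Circle1) (x' : Circle1) ↔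
      ¬ RR lam x x ∧ ¬ RR lam x' x' ∧ EE (RR lam) (QQ (RR lam)) x x' := by
  have h := RR_RL hd lam
  unfold UnlRel
  rw [RR_self, RR_self]
  constructor
  · rintro ⟨h1, h2, h3⟩
    refine ⟨h1, h2, ?_⟩
    rcases h3 with h3 | h3
    · obtain ⟨n, rfl⟩ := (coe_eq_iff _ _).1 h3
      exact h.EEQ_add x n
    · intro y hy
      exact (comp_iff hd lam hy (fun hh => h1 (lam.rel_rat _ _ hh).2)
        (fun hh => h2 (lam.rel_rat _ _ hh).2)).1 (h3 y ((RR_self lam y).1 hy))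
  · rintro ⟨h1, h2, h3⟩
    refine ⟨h1, h2, Or.inr fun y hy => ?_⟩
    obtain ⟨y, rfl⟩ := coe_surj y
    have hy := (RR_self lam y).2 hy
    exact (comp_iff hd lam hy (fun hh => h1 (lam.rel_rat _ _ hh).2)
        (fun hh => h2 (lam.rel_rat _ _ hh).2)).2 (h3 y hy)
end

section counting

def far (y a b : ℝ) : Prop := ∀ m : ℤ, y < |a - b - m|

structure Tower (d : ℕ) (T : ℕ → Set ℝ) : Prop where
  d2 : 2 ≤ d
  per : ∀ n x (m : ℤ), x ∈ T n → x + m ∈ T n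
  fwd : ∀ n x, x ∈ T n → (d : ℝ) * x ∈ T (n + 1)
  nc : ∀ n n', n ≠ n' → ∀ a b a' b', a ∈ T n → b ∈ T n → a' ∈ T n' → b' ∈ T n' →
    a < a' → a' < b → b < b' → b' < a + 1 → False
  disj : ∀ n n', n ≠ n' → ∀ x, x ∈ T n → x ∈ T n' → False

def Event (d : ℕ) (T : ℕ → Set ℝ) (y : ℝ) (n : ℕ) : Prop :=
  ∃ a ∈ T n, ∃ b ∈ T n, ∃ c ∈ T n, far y a b ∧ far y a c ∧ far y b c ∧ ¬ far y (d * a) (d * b)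

theorem far.symm {y a b : ℝ} (h : far y a b) : far y b a := by
  intro m
  have := h (-m)
  rw [abs_sub_comm] at this
  convert this using 2
  push_cast
  ring

theorem far.add_right {y a b : ℝ} (h : far y a b) (n : ℤ) : far y a (b + n) := by
  intro m
  have := h (n + m)
  push_cast at this
  rwa [show a - (b + n) - m = a - b - (n + m) by ring]

/-- shift `b` to the right of `a` within one period -/
theorem far.norm {y a b : ℝ} (h : far y a b) (hy : 0 < y) :
    ∃ n : ℤ, a + y < b + n ∧ b + n < a + 1 - y := by
  refine ⟨⌊a + 1 - b⌋, ?_, ?_⟩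
  · have h1 := Int.lt_floor_add_one (a + 1 - b)
    have h2 := h ⌊a + 1 - b⌋
    rcases lt_abs.1 h2 with h2 | h2 <;> linarith
  · have h1 := Int.floor_le (a + 1 - b)
    have h2 := h (⌊a + 1 - b⌋ - 1)
    push_cast at h2
    rcases lt_abs.1 h2 with h2 | h2 <;> linarith

variable {d : ℕ} {T : ℕ → Set ℝ}

theorem Tower.event_norm (hT : Tower d T) {y : ℝ} (hy : 0 < y) {n : ℕ}
    (h : Event d T y n) : ∃ a b c : ℝ, ∃ j : ℤ, a ∈ T n ∧ b ∈ T n ∧ c ∈ T n ∧ 0 ≤ a ∧ a < 1 ∧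
      1 ≤ j ∧ j + 1 ≤ d ∧ |d * (b - a) - j| ≤ y ∧ a < b ∧ b < a + 1 ∧
      ((a + y < c ∧ c < b - y) ∨ (b + y < c ∧ c < a + 1 - y)) := by
  obtain ⟨a0, ha0, b0, hb0, c0, hc0, hab, hac, hbc, hj⟩ := h
  have hd2 : (2 : ℝ) ≤ d := by exact_mod_cast hT.d2
  obtain ⟨a, ha⟩ : ∃ a, a = a0 + (-⌊a0⌋ : ℤ) := ⟨_, rfl⟩
  have hab' : far y a b0 := by rw [ha]; exact (hab.symm.add_right _).symm
  have hac' : far y a c0 := by rw [ha]; exact (hac.symm.add_right _).symm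
  obtain ⟨nb, hb1, hb2⟩ := hab'.norm hy
  obtain ⟨nc, hc1, hc2⟩ := hac'.norm hy
  have hbc' : far y (b0 + nb) (c0 + nc) := ((hbc.symm.add_right nb).symm).add_right nc
  unfold far at hj
  push Not at hj
  obtain ⟨m, hm⟩ := hj
  have hjeq : d * (b0 + nb - a) - ((-m + d * nb + d * ⌊a0⌋ : ℤ) : ℝ) = -(d * a0 - d * b0 - m) := by
    rw [ha]; push_cast; ring
  have hjle : |d * (b0 + nb - a) - ((-m + d * nb + d * ⌊a0⌋ : ℤ) : ℝ)| ≤ y := by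
    rw [hjeq, abs_neg]; exact hm
  generalize -m + d * nb + d * ⌊a0⌋ = j at hjle
  generalize hB : b0 + (nb : ℝ) = b at *
  generalize hCc : c0 + (nc : ℝ) = c at *
  obtain ⟨j1, j2⟩ := abs_le.1 hjle
  have e1 : d * y < d * (b - a) := mul_lt_mul_of_pos_left (by linarith) (by linarith)
  have e2 : d * (b - a) < d * (1 - y) := mul_lt_mul_of_pos_left (by linarith) (by linarith)
  have e3 : 2 * y ≤ d * y := mul_le_mul_of_nonneg_right hd2 hy.le
  have g1 : (0 : ℝ) < j := by linarith
  have g2 : (j : ℝ) < d := by linarith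
  have g1' : 0 < j := by exact_mod_cast g1
  have g2' : j < d := by exact_mod_cast g2
  refine ⟨a, b, c, j, ha ▸ hT.per _ _ _ ha0, hB ▸ hT.per _ _ _ hb0, hCc ▸ hT.per _ _ _ hc0,
    ?_, ?_, by omega, by omega, hjle, by linarith, by linarith, ?_⟩
  · rw [ha]; have := Int.floor_le a0; push_cast; linarith
  · rw [ha]; have := Int.lt_floor_add_one a0; push_cast; linarith
  · have := hbc' 0
    push_cast at this
    rcases lt_abs.1 this with h2 | h2
    · left; constructor <;> linarith
    · right; constructor <;> linarith

theorem Tower.three (hT : Tower d T) {y : ℝ} (hy : 0 < y) (hy' : 8 * (d * y) ≤ 1)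
    {n1 n2 n3 : ℕ} (n12 : n1 ≠ n2) (n13 : n1 ≠ n3) (n23 : n2 ≠ n3)
    {a1 b1 a2 b2 c2 a3 b3 : ℝ} {j : ℤ} (ha1 : a1 ∈ T n1) (hb1 : b1 ∈ T n1) (ha2 : a2 ∈ T n2)
    (hb2 : b2 ∈ T n2) (hc2 : c2 ∈ T n2) (ha3 : a3 ∈ T n3) (hb3 : b3 ∈ T n3)
    (hj1 : 1 ≤ j) (hjd : j + 1 ≤ d)
    (k1 : |d * (b1 - a1) - j| ≤ y) (k2 : |d * (b2 - a2) - j| ≤ y) (k3 : |d * (b3 - a3) - j| ≤ y)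
    (h12 : a1 < a2) (h23 : a2 < a3) (hcl : 4 * (d * (a3 - a1)) < 1)
    (hp1 : a1 < b1) (hp2 : a2 < b2) (hp3 : a3 < b3)
    (hq1 : b1 < a1 + 1) (hq2 : b2 < a2 + 1) (hq3 : b3 < a3 + 1)
    (hc : (a2 + y < c2 ∧ c2 < b2 - y) ∨ (b2 + y < c2 ∧ c2 < a2 + 1 - y)) : False := by
  have hd2 : (2 : ℝ) ≤ d := by exact_mod_cast hT.d2
  have hd : (0 : ℝ) < d := by linarith
  have e3 : 2 * y ≤ d * y := mul_le_mul_of_nonneg_right hd2 hy.le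
  have hj1' : (1 : ℝ) ≤ j := by exact_mod_cast hj1
  have hjd' : (j : ℝ) + 1 ≤ d := by exact_mod_cast hjd
  obtain ⟨k1a, k1b⟩ := abs_le.1 k1
  obtain ⟨k2a, k2b⟩ := abs_le.1 k2
  obtain ⟨k3a, k3b⟩ := abs_le.1 k3
  have dlt : ∀ {a b : ℝ}, d * a < d * b → a < b := fun hh => lt_of_mul_lt_mul_left hh hd.le
  have pair : ∀ {n n' : ℕ} {a b a' b' : ℝ}, n ≠ n' → a ∈ T n → b ∈ T n → a' ∈ T n' → b' ∈ T n' →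
      a < a' → 4 * (d * (a' - a)) < 1 → -y ≤ d * (b - a) - j → d * (b' - a') - j ≤ y → b' < b := by
    intro n n' a b a' b' hn ha hb ha' hb' hlt hc l1 l2
    rcases lt_trichotomy b' b with e | e | e
    · exact e
    · exact (hT.disj _ _ hn b hb (e ▸ hb')).elim
    · exact (hT.nc n n' hn a b a' b' ha hb ha' hb' hlt (dlt (by linarith)) e
        (dlt (by linarith))).elim
  have m12 : d * a1 < d * a2 := mul_lt_mul_of_pos_left h12 hd
  have m23 : d * a2 < d * a3 := mul_lt_mul_of_pos_left h23 hd
  have b21 : b2 < b1 := pair n12 ha1 hb1 ha2 hb2 h12 (by linarith) (by linarith) (by linarith)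
  have b32 : b3 < b2 := pair n23 ha2 hb2 ha3 hb3 h23 (by linarith) (by linarith) (by linarith)
  have hsum : (a3 - a1) + (b1 - b3) ≤ y := by
    have : d * ((a3 - a1) + (b1 - b3)) ≤ d * y := by linarith
    exact le_of_mul_le_mul_left this hd
  rcases hc with ⟨c1, c2'⟩ | ⟨c1, c2'⟩
  · exact hT.nc n3 n2 n23.symm a3 b3 c2 b2 ha3 hb3 hc2 hb2 (by linarith) (by linarith) b32 (by linarith)
  · exact hT.nc n1 n2 n12 a1 b1 a2 c2 ha1 hb1 ha2 hc2 h12 (by linarith) (by linarith) (by linarith)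

theorem Tower.event_card (hT : Tower d T) {y : ℝ} (hy : 0 < y) (hy' : 8 * (d * y) ≤ 1)
    (F : Finset ℕ) (hF : ∀ n ∈ F, Event d T y n) : F.card ≤ 2 * (d * (4 * d)) := by
  classical
  have hd2 : (2 : ℝ) ≤ d := by exact_mod_cast hT.d2
  have hd : (0 : ℝ) < d := by linarith
  by_contra hcon
  push Not at hcon
  have H := fun n hn => hT.event_norm hy (hF n hn)
  choose! a b c j ha hb hc ha0 ha1 hj1 hjd hk hab hba hcc using H
  let f : ℕ → ℤ × ℤ := fun n => (j n - 1, ⌊4 * (d * a n)⌋)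
  have hmaps : ∀ n ∈ F, f n ∈ (Finset.Ico (0 : ℤ) d) ×ˢ (Finset.Ico (0 : ℤ) (4 * d)) := by
    intro n hn
    have := hj1 n hn
    have := hjd n hn
    have b1 : 0 ≤ d * a n := mul_nonneg hd.le (ha0 n hn)
    have b2 : d * a n < d * 1 := mul_lt_mul_of_pos_left (ha1 n hn) hd
    simp only [f, Finset.mem_product, Finset.mem_Ico]
    refine ⟨⟨by omega, by omega⟩, Int.floor_nonneg.2 (by linarith), ?_⟩
    rw [Int.floor_lt]; push_cast; linarith
  obtain ⟨⟨v1, v2⟩, -, hv⟩ := Finset.exists_lt_card_fiber_of_mul_lt_card_of_maps_to hmaps (n := 2) (by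
    simp only [Finset.card_product, Int.card_Ico]
    have e1 : ((d : ℤ) - 0).toNat = d := by omega
    have e2 : ((4 * d : ℤ) - 0).toNat = 4 * d := by omega
    rw [e1, e2]; linarith)
  obtain ⟨n1, h1, n2, h2, n3, h3, n12, n13, n23⟩ := Finset.two_lt_card.1 hv
  simp only [Finset.mem_filter, f, Prod.mk.injEq] at h1 h2 h3
  obtain ⟨hn1, p1, q1⟩ := h1
  obtain ⟨hn2, p2, q2⟩ := h2
  obtain ⟨hn3, p3, q3⟩ := h3
  have j1 : j n1 = v1 + 1 := by omega
  have j2 : j n2 = v1 + 1 := by omega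
  have j3 : j n3 = v1 + 1 := by omega
  have r12 := Int.abs_sub_lt_one_of_floor_eq_floor (q1.trans q2.symm)
  have r13 := Int.abs_sub_lt_one_of_floor_eq_floor (q1.trans q3.symm)
  have r23 := Int.abs_sub_lt_one_of_floor_eq_floor (q2.trans q3.symm)
  have ne : ∀ n n', n ∈ F → n' ∈ F → n ≠ n' → a n ≠ a n' := fun n n' hn hn' hne e =>
    hT.disj n n' hne (a n) (ha n hn) (e ▸ ha n' hn')
  have T3 : ∀ n1 n2 n3, n1 ∈ F → n2 ∈ F → n3 ∈ F → n1 ≠ n2 → n1 ≠ n3 → n2 ≠ n3 →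
      j n1 = v1 + 1 → j n2 = v1 + 1 → j n3 = v1 + 1 → a n1 < a n2 → a n2 < a n3 →
      |4 * (d * a n1) - 4 * (d * a n3)| < 1 → False := by
    intro n1 n2 n3 hn1 hn2 hn3 n12 n13 n23 j1 j2 j3 l12 l23 hcl
    exact hT.three hy hy' n12 n13 n23 (ha _ hn1) (hb _ hn1) (ha _ hn2) (hb _ hn2) (hc _ hn2)
      (ha _ hn3) (hb _ hn3) (j1 ▸ hj1 _ hn1) (j1 ▸ hjd _ hn1) (j1 ▸ hk _ hn1) (j2 ▸ hk _ hn2)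
      (j3 ▸ hk _ hn3) l12 l23 (by have := (abs_lt.1 hcl).1; linarith) (hab _ hn1) (hab _ hn2)
      (hab _ hn3) (hba _ hn1) (hba _ hn2) (hba _ hn3) (hcc _ hn2)
  have r21 := r12
  have r31 := r13
  have r32 := r23
  rw [abs_sub_comm] at r21 r31 r32
  rcases lt_or_gt_of_ne (ne _ _ hn1 hn2 n12) with l12 | l12 <;>
  rcases lt_or_gt_of_ne (ne _ _ hn1 hn3 n13) with l13 | l13 <;>
  rcases lt_or_gt_of_ne (ne _ _ hn2 hn3 n23) with l23 | l23
  · exact T3 n1 n2 n3 hn1 hn2 hn3 n12 n13 n23 j1 j2 j3 l12 l23 r13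
  · exact T3 n1 n3 n2 hn1 hn3 hn2 n13 n12 n23.symm j1 j3 j2 l13 l23 r12
  · linarith
  · exact T3 n3 n1 n2 hn3 hn1 hn2 n13.symm n23.symm n12 j3 j1 j2 l13 l12 r32
  · exact T3 n2 n1 n3 hn2 hn1 hn3 n12.symm n23 n13 j2 j1 j3 l12 l13 r23
  · linarith
  · exact T3 n2 n3 n1 hn2 hn3 hn1 n23 n12.symm n13.symm j2 j3 j1 l23 l13 r21
  · exact T3 n3 n2 n1 hn3 hn2 hn1 n23.symm n13.symm n12.symm j3 j2 j1 l23 l12 r31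

end counting

section counting
variable {d : ℕ} {T : ℕ → Set ℝ}

theorem far.ne {y a b : ℝ} (h : far y a b) (hy : 0 < y) : a ≠ b := by
  rintro rfl
  have := h 0
  simp at this
  linarith

/-- a far-separated finite configuration -/
def Conf (T : ℕ → Set ℝ) (y : ℝ) (n N : ℕ) : Prop :=
  ∃ F : Finset ℝ, N ≤ F.card ∧ (∀ a ∈ F, a ∈ T n) ∧ ∀ a ∈ F, ∀ b ∈ F, a ≠ b → far y a b

theorem Tower.push (hT : Tower d T) {y : ℝ} (hy : 0 < y) {n : ℕ} (F : Finset ℝ)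
    (hF : ∀ a ∈ F, a ∈ T n) (hfar : ∀ a ∈ F, ∀ b ∈ F, a ≠ b → far y (d * a) (d * b)) :
    Conf T y (n + 1) F.card := by
  classical
  have hd2 : (2 : ℝ) ≤ d := by exact_mod_cast hT.d2
  refine ⟨F.image fun a => (d : ℝ) * a, ?_, ?_, ?_⟩
  · rw [Finset.card_image_of_injective]
    intro a b hab
    exact mul_left_cancel₀ (by linarith) hab
  · intro a ha
    obtain ⟨a, hA, rfl⟩ := Finset.mem_image.1 ha
    exact hT.fwd _ _ (hF a hA)
  · intro a ha b hb hab
    obtain ⟨a, hA, rfl⟩ := Finset.mem_image.1 ha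
    obtain ⟨b, hB, rfl⟩ := Finset.mem_image.1 hb
    exact hfar a hA b hB fun e => hab (by rw [e])

theorem Tower.step_nonevent (hT : Tower d T) {y : ℝ} (hy : 0 < y) {n N : ℕ} (hN : 3 ≤ N)
    (hev : ¬ Event d T y n) (h : Conf T y n N) : Conf T y (n + 1) N := by
  classical
  obtain ⟨F, hc, hF, hfar⟩ := h
  obtain ⟨G, h1, h2, h3⟩ := hT.push hy F hF (by
    intro a ha b hb hab
    by_contra hn
    have : ({a, b} : Finset ℝ).card < F.card := by
      have := Finset.card_le_two (a := a) (b := b)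
      omega
    obtain ⟨c, hc, hc'⟩ := Finset.exists_mem_notMem_of_card_lt_card this
    simp only [Finset.mem_insert, Finset.mem_singleton, not_or] at hc'
    exact hev ⟨a, hF a ha, b, hF b hb, c, hF c hc, hfar a ha b hb hab,
      hfar a ha c hc (Ne.symm hc'.1), hfar b hb c hc (Ne.symm hc'.2), hn⟩)
  exact ⟨G, hc.trans h1, h2, h3⟩

theorem Tower.step_event (hT : Tower d T) {y : ℝ} (hy : 0 < y) (hy' : 8 * (d * y) ≤ 1) {n N : ℕ}
    (h : Conf T y n ((2 * d) * N)) : Conf T y (n + 1) N := by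
  classical
  have hd2 : (2 : ℝ) ≤ d := by exact_mod_cast hT.d2
  have hd : (0 : ℝ) < d := by linarith
  have hd0 : 2 ≤ d := hT.d2
  obtain ⟨F, hc, hF, hfar⟩ := h
  rcases Nat.eq_zero_or_pos N with rfl | hN
  · exact ⟨∅, by simp, by simp, by simp⟩
  let f : ℝ → ℤ := fun a => ⌊2 * (d * Int.fract a)⌋
  have hmaps : ∀ a ∈ F, f a ∈ Finset.Ico (0 : ℤ) (2 * d) := by
    intro a _
    have b1 : 0 ≤ d * Int.fract a := mul_nonneg hd.le (Int.fract_nonneg a)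
    have b2 : d * Int.fract a < d * 1 := mul_lt_mul_of_pos_left (Int.fract_lt_one a) hd
    simp only [f, Finset.mem_Ico]
    refine ⟨Int.floor_nonneg.2 (by linarith), ?_⟩
    rw [Int.floor_lt]; push_cast; linarith
  have hcard : (Finset.Ico (0 : ℤ) (2 * d)).card = 2 * d := by
    rw [Int.card_Ico]; omega
  obtain ⟨v, -, hv⟩ := Finset.exists_le_card_fiber_of_mul_le_card_of_maps_to hmaps (n := N)
    ⟨0, by simp; omega⟩ (by rw [hcard]; exact hc)
  obtain ⟨G, h1, h2, h3⟩ := hT.push hy (F.filter fun x => f x = v)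
    (fun a ha => hF a (Finset.mem_filter.1 ha).1) (by
    intro a ha b hb hab
    obtain ⟨ha, ha'⟩ := Finset.mem_filter.1 ha
    obtain ⟨hb, hb'⟩ := Finset.mem_filter.1 hb
    have r := Int.abs_sub_lt_one_of_floor_eq_floor (ha'.trans hb'.symm)
    have g := hfar a ha b hb hab (⌊a⌋ - ⌊b⌋)
    have hfr : a - b - ((⌊a⌋ - ⌊b⌋ : ℤ) : ℝ) = Int.fract a - Int.fract b := by
      unfold Int.fract; push_cast; ring
    rw [hfr] at g
    set δ := Int.fract a - Int.fract b with hδ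
    have r' : |2 * (d * δ)| < 1 := by
      rw [hδ, show 2 * (d * (Int.fract a - Int.fract b)) =
        2 * (d * Int.fract a) - 2 * (d * Int.fract b) by ring]
      exact r
    have r2 : |d * δ| < 1 / 2 := by rw [abs_mul, abs_two] at r'; linarith
    have r3 : d * y < |d * δ| := by
      rw [abs_mul, abs_of_pos hd]; exact mul_lt_mul_of_pos_left g hd
    have r4 : 2 * y ≤ d * y := mul_le_mul_of_nonneg_right hd2 hy.le
    intro m
    have hm : d * a - d * b - m = d * δ - ((m - d * (⌊a⌋ - ⌊b⌋) : ℤ) : ℝ) := by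
      rw [← hfr]; push_cast; ring
    rw [hm]
    generalize m - d * (⌊a⌋ - ⌊b⌋) = k
    rcases eq_or_ne k 0 with rfl | hk
    · simp only [Int.cast_zero, sub_zero]; linarith
    · have h1 : (1 : ℝ) ≤ |(k : ℝ)| := by
        have := Int.one_le_abs hk
        exact_mod_cast this
      have h2 := abs_sub_abs_le_abs_sub (k : ℝ) (d * δ)
      rw [abs_sub_comm (k : ℝ)] at h2
      linarith)
  exact ⟨G, hv.trans h1, h2, h3⟩

theorem Tower.conf_all (hT : Tower d T) {y : ℝ} (hy : 0 < y) (hy' : 8 * (d * y) ≤ 1)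
    (h0 : Conf T y 0 (3 * (2 * d) ^ (2 * (d * (4 * d))))) (n : ℕ) : Conf T y n 3 := by
  classical
  have hd0 : 2 ≤ d := hT.d2
  set M := 2 * (d * (4 * d)) with hM
  have hb : ∀ n, ((Finset.range n).filter (Event d T y)).card ≤ M := fun n =>
    hT.event_card hy hy' _ fun k hk => (Finset.mem_filter.1 hk).2
  have h3 : ∀ k, 3 ≤ 3 * (2 * d) ^ k := fun k => by
    have : 0 < (2 * d) ^ k := by positivity
    omega
  have key : ∀ n, Conf T y n
      (3 * (2 * d) ^ (M - ((Finset.range n).filter (Event d T y)).card)) := by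
    intro n
    induction n with
    | zero => simpa using h0
    | succ n ih =>
      by_cases hev : Event d T y n
      · have hc : ((Finset.range (n + 1)).filter (Event d T y)).card =
            ((Finset.range n).filter (Event d T y)).card + 1 := by
          rw [Finset.range_add_one, Finset.filter_insert, if_pos hev, Finset.card_insert_of_notMem]
          simp
        have := hb (n + 1)
        apply hT.step_event hy hy'
        rw [hc] at this ⊢
        convert ih using 1
        rw [show M - ((Finset.range n).filter (Event d T y)).card =
          (M - (((Finset.range n).filter (Event d T y)).card + 1)) + 1 by omega, pow_succ]
        ring
      · have hc : (Finset.range (n + 1)).filter (Event d T y) =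
            (Finset.range n).filter (Event d T y) := by
          rw [Finset.range_add_one, Finset.filter_insert, if_neg hev]
        rw [hc]
        exact hT.step_nonevent hy (h3 _) hev ih
  obtain ⟨F, hc, hF⟩ := key n
  exact ⟨F, (h3 _).trans hc, hF⟩

theorem Tower.conf_zero (hT : Tower d T) (hinf : (T 0 ∩ Ico 0 1).Infinite) (N : ℕ) :
    ∃ y : ℝ, 0 < y ∧ 8 * (d * y) ≤ 1 ∧ Conf T y 0 N := by
  classical
  have hd2 : (2 : ℝ) ≤ d := by exact_mod_cast hT.d2
  have hd : (0 : ℝ) < d := by linarith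
  obtain ⟨F, hF, hc⟩ := hinf.exists_subset_card_eq N
  have h1 : ∀ a ∈ F, ∀ b ∈ F, ∀ᶠ y in nhdsWithin (0 : ℝ) (Ioi 0), a ≠ b → far y a b := by
    intro a ha b hb
    obtain ⟨-, ha0, ha1⟩ := hF ha
    obtain ⟨-, hb0, hb1⟩ := hF hb
    by_cases hab : a = b
    · filter_upwards with y h using absurd hab h
    have hpos : 0 < |a - b| := abs_pos.2 (sub_ne_zero.2 hab)
    have hlt : |a - b| < 1 := by rw [abs_lt]; constructor <;> linarith
    have hμ : 0 < min |a - b| (1 - |a - b|) := lt_min hpos (by linarith)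
    filter_upwards [Ioo_mem_nhdsGT hμ] with y hyy _ m
    have y1 := hyy.2.trans_le (min_le_left _ _)
    have y2 := hyy.2.trans_le (min_le_right _ _)
    rcases eq_or_ne m 0 with rfl | hk
    · simpa using y1
    · have h1 : (1 : ℝ) ≤ |(m : ℝ)| := by
        have := Int.one_le_abs hk
        exact_mod_cast this
      have h2 := abs_sub_abs_le_abs_sub (m : ℝ) (a - b)
      rw [abs_sub_comm (m : ℝ)] at h2
      linarith
  have h2 : ∀ᶠ y in nhdsWithin (0 : ℝ) (Ioi 0), ∀ a ∈ F, ∀ b ∈ F, a ≠ b → far y a b := by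
    rw [Filter.eventually_all_finset]
    intro a ha
    rw [Filter.eventually_all_finset]
    exact h1 a ha
  have h3 : (0 : ℝ) < 1 / (8 * d) := by positivity
  obtain ⟨y, hy, hy1, hy2⟩ := (h2.and (Ioo_mem_nhdsGT h3)).exists
  refine ⟨y, hy1, ?_, F, hc.ge, fun a ha => (hF ha).1, hy⟩
  rw [lt_div_iff₀ (by positivity)] at hy2
  linarith

theorem Tower.triple (hT : Tower d T) {y : ℝ} (hy : 0 < y) {n : ℕ} (h : Conf T y n 3) :
    ∃ a b c : ℝ, a ∈ T n ∧ b ∈ T n ∧ c ∈ T n ∧ 0 ≤ a ∧ a < 1 ∧ a + y < b ∧ b + y < c ∧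
      c + y < a + 1 := by
  obtain ⟨F, hc, hF, hfar⟩ := h
  obtain ⟨a0, ha0, b0, hb0, c0, hc0, hab, hac, hbc⟩ := Finset.two_lt_card.1 hc
  have fab := hfar a0 ha0 b0 hb0 hab
  have fac := hfar a0 ha0 c0 hc0 hac
  have fbc := hfar b0 hb0 c0 hc0 hbc
  obtain ⟨a, ha⟩ : ∃ a, a = a0 + (-⌊a0⌋ : ℤ) := ⟨_, rfl⟩
  have fab' : far y a b0 := by rw [ha]; exact (fab.symm.add_right _).symm
  have fac' : far y a c0 := by rw [ha]; exact (fac.symm.add_right _).symm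
  obtain ⟨nb, hb1, hb2⟩ := fab'.norm hy
  obtain ⟨nc, hc1, hc2⟩ := fac'.norm hy
  have hbc' := (((fbc.symm.add_right nb).symm).add_right nc) 0
  have A : a ∈ T n := ha ▸ hT.per _ _ _ (hF _ ha0)
  have B := hT.per _ _ nb (hF _ hb0)
  have C := hT.per _ _ nc (hF _ hc0)
  have a1 : 0 ≤ a := by rw [ha]; have := Int.floor_le a0; push_cast; linarith
  have a2 : a < 1 := by rw [ha]; have := Int.lt_floor_add_one a0; push_cast; linarith
  push_cast at hbc'
  rcases lt_abs.1 hbc' with h2 | h2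
  · exact ⟨a, _, _, A, C, B, a1, a2, by linarith, by linarith, by linarith⟩
  · exact ⟨a, _, _, A, B, C, a1, a2, by linarith, by linarith, by linarith⟩

theorem Tower.false (hT : Tower d T) (hinf : (T 0 ∩ Ico 0 1).Infinite) : False := by
  obtain ⟨y, hy, hy', h0⟩ := hT.conf_zero hinf (3 * (2 * d) ^ (2 * (d * (4 * d))))
  have H := fun n => hT.triple hy (hT.conf_all hy hy' h0 n)
  choose a b c ha hb hc a0 a1 hab hbc hca using H
  obtain ⟨K, hK⟩ := exists_nat_gt (1 / y)
  have hK' : 1 < K * y := by rwa [div_lt_iff₀ hy] at hK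
  have hKn : (0 : ℝ) ≤ K := Nat.cast_nonneg K
  have hK0 : (0 : ℝ) < K := lt_trans (by positivity) hK
  have hmaps : MapsTo (fun n => ((⌊K * a n⌋, ⌊K * b n⌋, ⌊K * c n⌋) : ℤ × ℤ × ℤ)) univ
      (Icc (0 : ℤ) (2 * K) ×ˢ (Icc (0 : ℤ) (2 * K) ×ˢ Icc (0 : ℤ) (2 * K))) := by
    have aux : ∀ x : ℝ, 0 ≤ x → x ≤ 2 → ⌊K * x⌋ ∈ Icc (0 : ℤ) (2 * K) := by
      intro x x0 x2
      refine ⟨Int.floor_nonneg.2 (mul_nonneg hKn x0), ?_⟩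
      have h1 : K * x ≤ K * 2 := mul_le_mul_of_nonneg_left x2 hKn
      have : (⌊K * x⌋ : ℝ) ≤ 2 * K := (Int.floor_le _).trans (by linarith)
      exact_mod_cast this
    intro n _
    have := a0 n; have := a1 n; have := hab n; have := hbc n; have := hca n
    exact ⟨aux _ (by linarith) (by linarith), aux _ (by linarith) (by linarith),
      aux _ (by linarith) (by linarith)⟩
  have hfin : (Icc (0 : ℤ) (2 * K) ×ˢ (Icc (0 : ℤ) (2 * K) ×ˢ Icc (0 : ℤ) (2 * K))).Finite :=
    (finite_Icc _ _).prod ((finite_Icc _ _).prod (finite_Icc _ _))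
  obtain ⟨n, -, n', -, hne, heq⟩ :=
    (infinite_univ (α := ℕ)).exists_ne_map_eq_of_mapsTo hmaps hfin
  simp only [Prod.mk.injEq] at heq
  obtain ⟨q1, -, q3⟩ := heq
  have cl : ∀ x z : ℝ, ⌊K * x⌋ = ⌊K * z⌋ → |x - z| < y := by
    intro x z hxz
    have := Int.abs_sub_lt_one_of_floor_eq_floor hxz
    rw [← mul_sub, abs_mul, abs_of_pos hK0] at this
    exact lt_of_mul_lt_mul_left (this.trans hK') hKn
  obtain ⟨r1, r2⟩ := abs_lt.1 (cl _ _ q1)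
  obtain ⟨r5, r6⟩ := abs_lt.1 (cl _ _ q3)
  have := hab n; have := hbc n; have := hca n
  have := hab n'; have := hbc n'; have := hca n'
  rcases lt_trichotomy (a n) (a n') with hl | hl | hl
  · exact hT.nc n n' hne (a n) (b n) (a n') (c n') (ha n) (hb n) (ha n') (hc n') hl
      (by linarith) (by linarith) (by linarith)
  · exact hT.disj n n' hne (a n) (ha n) (hl ▸ ha n')
  · exact hT.nc n' n hne.symm (a n') (b n') (a n) (c n) (ha n') (hb n') (ha n) (hc n) hl
      (by linarith) (by linarith) (by linarith)

end counting

section main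
variable {d : ℕ}

def TT (d : ℕ) (L : Set Circle1) (n : ℕ) : Set ℝ := {x | (x : Circle1) ∈ (md d)^[n] '' L}

theorem TT_succ (L : Set Circle1) (n : ℕ) (v : ℝ) :
    v ∈ TT d L (n + 1) ↔ ∃ x ∈ TT d L n, ∃ m : ℤ, v = d * x + m := by
  unfold TT
  simp only [mem_setOf_eq, Function.iterate_succ', image_comp]
  constructor
  · rintro ⟨c, hc, hv⟩
    obtain ⟨x, rfl⟩ := coe_surj c
    rw [md_coe] at hv
    obtain ⟨m, hm⟩ := (coe_eq_iff _ _).1 hv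
    exact ⟨x, hc, m, hm⟩
  · rintro ⟨x, hx, m, rfl⟩
    refine ⟨x, hx, ?_⟩
    rw [md_coe, coe_add_int]

theorem TT_eq {L : Set Circle1} {n n' : ℕ} (h : TT d L n = TT d L n') :
    (md d)^[n] '' L = (md d)^[n'] '' L := by
  ext c
  obtain ⟨x, rfl⟩ := coe_surj c
  exact Set.ext_iff.1 h x

def Gam (d : ℕ) (R : ℝ → ℝ → Prop) : Set ℝ :=
  {p | ∃ e ∈ Ico (0 : ℝ) 1, R e e ∧ Exo d R e ∧ ∃ n : ℕ, p = (d : ℝ) ^ (n + 1) * e}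

theorem RL.Gam_fin {R : ℝ → ℝ → Prop} (h : RL d R) :
    ∃ G : Set ℝ, G.Finite ∧ ∀ p ∈ Gam d R, ∃ g ∈ G, ∃ m : ℤ, p = g + m := by
  have H : ∀ e : ℝ, ∃ G : Set ℝ, G.Finite ∧ (R e e → ∀ n : ℕ, ∃ g ∈ G, ∃ m : ℤ,
      (d : ℝ) ^ (n + 1) * e = g + m) := by
    intro e
    by_cases he : R e e
    · obtain ⟨q, hq⟩ := (h.rat e).1 he
      have hden : (0 : ℤ) < q.den := by exact_mod_cast q.den_pos
      have hdenr : (0 : ℝ) < q.den := by exact_mod_cast q.den_pos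
      refine ⟨(fun i : ℤ => (i : ℝ) / q.den) '' Icc 0 (q.den : ℤ), (finite_Icc _ _).image _,
        fun _ n => ?_⟩
      set z : ℤ := (d : ℤ) ^ (n + 1) * q.num with hz
      refine ⟨_, ⟨z % q.den, ⟨Int.emod_nonneg _ hden.ne', (Int.emod_lt_of_pos _ hden).le⟩, rfl⟩,
        z / q.den, ?_⟩
      have h1 : ((z % q.den : ℤ) : ℝ) = z - q.den * (z / q.den : ℤ) := by
        rw [eq_sub_iff_add_eq]; exact_mod_cast Int.emod_add_mul_ediv z q.den
      have h2 : e = q.num / q.den := by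
        rw [← hq]; exact_mod_cast (Rat.num_div_den q).symm
      simp only
      rw [h1, h2, hz]
      push_cast
      field_simp
      ring
    · exact ⟨∅, finite_empty, fun hh => absurd hh he⟩
  choose G hG hG' using H
  refine ⟨⋃ e ∈ {z | z ∈ Ico (0 : ℝ) 1 ∧ R z z ∧ Exo d R z}, G e,
    h.exoFin.biUnion fun e _ => hG e, ?_⟩
  rintro p ⟨e, he, hee, hx, n, rfl⟩
  obtain ⟨g, hg, m, hm⟩ := hG' e hee n
  refine ⟨g, ?_, m, hm⟩
  simp only [mem_iUnion]
  exact ⟨e, ⟨he, hee, hx⟩, hg⟩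

def Good (d : ℕ) (R : ℝ → ℝ → Prop) (x : ℝ) : Prop := ∃ p ∈ Gam d R, EE R (QQ R) p x

theorem Good.congr {R : ℝ → ℝ → Prop} {x y : ℝ} (hx : Good d R x) (hE : EE R (QQ R) x y) :
    Good d R y := by
  obtain ⟨p, hp, hE'⟩ := hx
  exact ⟨p, hp, hE'.trans hE⟩

theorem RL.good_exo {R : ℝ → ℝ → Prop} (h : RL d R) {t u : ℝ} (hE : EE R (QQ R) t u)
    (hn : ¬ EE R (QQ R) (d * t) (d * u)) : Good d R (d * t) := by
  obtain ⟨e, h1, h2, h3, h4⟩ := h.exoQ hE hn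
  exact ⟨d * e, ⟨e, h1, h2, h3, 0, by simp⟩, h4.symm⟩

theorem RL.good_fwd {R : ℝ → ℝ → Prop} (h : RL d R) {x : ℝ} (hx : Good d R x) :
    Good d R (d * x) := by
  obtain ⟨p, hp, hE⟩ := hx
  by_cases hc : EE R (QQ R) (d * x) (d * p)
  · obtain ⟨e, h1, h2, h3, n, rfl⟩ := hp
    exact ⟨_, ⟨e, h1, h2, h3, n + 1, by ring⟩, hc.symm⟩
  · exact h.good_exo hE.symm hc

theorem main_real (hd : 2 ≤ d) (lam : InvRatLam d) (L : Set Circle1) (hL : IsUnlClass lam.rel L)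
    (hinf : L.Infinite) : ∃ n n', n ≠ n' ∧ TT d L n = TT d L n' := by
  have h := RR_RL hd lam
  have hdp := h.dpos
  set R := RR lam with hR
  obtain ⟨θ, hθ, hLθ⟩ := hL
  obtain ⟨t, rfl⟩ := coe_surj θ
  have T0 : ∀ x, x ∈ TT d L 0 ↔ ¬ R t t ∧ ¬ R x x ∧ EE R (QQ R) t x := by
    intro x
    rw [← unl_iff hd lam]
    simp [TT, hLθ]
  have irr : ∀ n x, x ∈ TT d L n → ¬ R x x := by
    intro n
    induction n with
    | zero => exact fun x hx => ((T0 x).1 hx).2.1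
    | succ n ih =>
      intro v hv hvv
      obtain ⟨x, hx, m, rfl⟩ := (TT_succ L n v).1 hv
      apply ih x hx
      apply h.ratdiv
      exact h.right ((h.per_iff m).1 hvv)
  have sat : ∀ n x v, x ∈ TT d L n → EE R (QQ R) x v → ¬ R v v → v ∈ TT d L n := by
    intro n
    induction n with
    | zero =>
      intro x v hx hE hv
      obtain ⟨h1, h2, h3⟩ := (T0 x).1 hx
      exact (T0 v).2 ⟨h1, hv, h3.trans hE⟩
    | succ n ih =>
      intro x v hx hE hv
      obtain ⟨x0, hx0, m, rfl⟩ := (TT_succ L n x).1 hx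
      obtain ⟨t', k, h1, h2⟩ := h.satQ ((h.EEQ_add (d * x0) m).trans hE)
      refine (TT_succ L n v).2 ⟨t', ih x0 t' hx0 h1 ?_, -k, by rw [h2]; push_cast; ring⟩
      intro hh
      have := h.fwd _ _ hh
      rw [h2] at this
      exact hv (h.right ((h.per_iff k).1 this))
  have fwd : ∀ n x, x ∈ TT d L n → (d : ℝ) * x ∈ TT d L (n + 1) := fun n x hx =>
    (TT_succ L n _).2 ⟨x, hx, 0, by simp⟩
  by_cases hA : ∃ n, ∀ x ∈ TT d L n, Good d R x
  · obtain ⟨n, hn⟩ := hA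
    have hk : ∀ k, ∀ x ∈ TT d L (n + k), Good d R x := by
      intro k
      induction k with
      | zero => exact hn
      | succ k ih =>
        intro v hv
        obtain ⟨x, hx, m, rfl⟩ := (TT_succ L (n + k) v).1 hv
        exact (h.good_fwd (ih x hx)).congr (h.EEQ_add _ _)
    obtain ⟨G, hG, hG'⟩ := h.Gam_fin
    let σ : ℕ → Set ℝ := fun k => {g | g ∈ G ∧ ∃ x ∈ TT d L (n + k), EE R (QQ R) g x}
    obtain ⟨k, -, k', -, hne, heq⟩ := (infinite_univ (α := ℕ)).exists_ne_map_eq_of_mapsTo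
      (f := σ) (t := {S | S ⊆ G}) (fun k _ g hg => hg.1) hG.finite_subsets
    have sub : ∀ k k', σ k = σ k' → TT d L (n + k) ⊆ TT d L (n + k') := by
      intro k k' heq x hx
      obtain ⟨p, hp, hE⟩ := hk k x hx
      obtain ⟨g, hg, m, rfl⟩ := hG' p hp
      have hgx := (h.EEQ_add g m).trans hE
      have hgs : g ∈ σ k := ⟨hg, x, hx, hgx⟩
      rw [heq] at hgs
      obtain ⟨-, x', hx', hE'⟩ := hgs
      exact sat _ x' x hx' (hE'.symm.trans hgx) (irr _ x hx)
    exact ⟨n + k, n + k', by omega, (sub k k' heq).antisymm (sub k' k heq.symm)⟩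
  · push Not at hA
    have single : ∀ n, ∀ x ∈ TT d L n, ∀ x' ∈ TT d L n, EE R (QQ R) x x' := by
      intro n
      induction n with
      | zero =>
        intro x hx x' hx'
        exact (((T0 x).1 hx).2.2).symm.trans ((T0 x').1 hx').2.2
      | succ n ih =>
        intro x hx x' hx'
        by_contra hne
        obtain ⟨v, hv, hgood⟩ := hA (n + 1)
        obtain ⟨x0, hx0, m, rfl⟩ := (TT_succ L n x).1 hx
        obtain ⟨x1, hx1, m', rfl⟩ := (TT_succ L n x').1 hx'
        obtain ⟨v0, hv0, mv, rfl⟩ := (TT_succ L n v).1 hv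
        apply hgood
        refine Good.congr (x := d * v0) ?_ (h.EEQ_add _ _)
        by_cases c0 : EE R (QQ R) (d * v0) (d * x0)
        · by_cases c1 : EE R (QQ R) (d * v0) (d * x1)
          · exact absurd (((h.EEQ_add _ _).symm.trans c0.symm).trans (c1.trans (h.EEQ_add _ _))) hne
          · exact h.good_exo (ih v0 hv0 x1 hx1) c1
        · exact h.good_exo (ih v0 hv0 x0 hx0) c0
    by_contra hno
    push Not at hno
    have disj : ∀ n n', n ≠ n' → ∀ x, x ∈ TT d L n → x ∈ TT d L n' → False := by
      intro n n' hne x hx hx'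
      refine hno n n' hne (Subset.antisymm ?_ ?_)
      · exact fun y hy => sat _ x y hx' (single n x hx y hy) (irr _ y hy)
      · exact fun y hy => sat _ x y hx (single n' x hx' y hy) (irr _ y hy)
    have hT : Tower d (TT d L) :=
      { d2 := hd
        per := by
          intro n x m hx
          unfold TT at hx ⊢
          rw [mem_setOf_eq, coe_add_int]
          exact hx
        fwd := fwd
        nc := by
          intro n n' hne a b a' b' ha hb ha' hb' h1 h2 h3 h4
          have := h.EE_nc (single n a ha b hb) (single n' a' ha' b' hb') h1 h2 h3 h4
          exact disj n n' hne a' (sat n a a' ha this (irr _ _ ha')) ha'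
        disj := disj }
    refine hT.false fun hfin => hinf ((hfin.image fun x : ℝ => (x : Circle1)).subset ?_)
    intro c hc
    obtain ⟨x, rfl⟩ := coe_surj c
    refine ⟨x + (-⌊x⌋ : ℤ), ⟨?_, ?_, ?_⟩, coe_add_int _ _⟩
    · unfold TT
      rw [mem_setOf_eq, coe_add_int]
      simpa using hc
    · have := Int.floor_le x; push_cast; linarith
    · have := Int.lt_floor_add_one x; push_cast; linarith

end main

/-- Every infinite `λ`-unlinked class of a `d`-invariant rational
lamination is eventually periodic under `m_d`. -/
theorem infinite_unlinked_class_eventually_periodic (d : ℕ) (hd : 2 ≤ d)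
    (lam : InvRatLam d) (L : Set Circle1) (hL : IsUnlClass lam.rel L)
    (hinf : L.Infinite) :
    ∃ n, 0 < n ∧ ∃ ℓ, (md d)^[n + ℓ] '' L = (md d)^[ℓ] '' L := by
  obtain ⟨n, n', hne, heq⟩ := main_real hd lam L hL hinf
  have heq := TT_eq heq
  rcases lt_or_gt_of_ne hne with hlt | hlt
  · exact ⟨n' - n, by omega, n, by rw [show n' - n + n = n' by omega, heq]⟩
  · exact ⟨n - n', by omega, n', by rw [show n - n' + n' = n by omega, heq]⟩
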